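/- arXiv:1707.00038 — 3 statements merged into one kernel-verified Lean document; each statement's English description precedes it below -/
import Mathlib

section
/- (Theorem 2 (iii), Huang–Aronson) Suppose I > 1, β > 0, and γ ≠ 0 or R ≠ 0. Then there exists an integer N₀ such that for every N > N₀ the normalized discrete rotating wave solution of the Josephson junction system with LRC load is unique: if {ψ, Q} and {ψ̃, Q̃} are both normalized DRW solutions with N junctions, of periods T and T̃ respectively, then T = T̃, ψ = ψ̃ and Q' = Q̃'. -/
open Real

/-- `ψ` is a running function of period `T`: `ψ (t + T) = ψ t + 2π` for all `t`. -/
def IsRunning (ψ : ℝ → ℝ) (T : ℝ) : Prop :=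
  ∀ t : ℝ, ψ (t + T) = ψ t + 2 * Real.pi

/-- The Josephson junction system with LRC load:
`β φ_k'' + φ_k' + sin (φ_k) + Q' = I` for each junction `k`, together with the load
equation `L Q'' + R Q' + γ Q = (1/N) ∑_j φ_j'`. -/
def JJSystem (N : ℕ) (β I L R γ : ℝ) (φ : Fin N → ℝ → ℝ) (Q : ℝ → ℝ) : Prop :=
  (∀ k : Fin N, ∀ t : ℝ,
      β * deriv (deriv (φ k)) t + deriv (φ k) t + Real.sin (φ k t) + deriv Q t = I) ∧
  (∀ t : ℝ,
      L * deriv (deriv Q) t + R * deriv Q t + γ * Q t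
        = (1 / (N : ℝ)) * ∑ j : Fin N, deriv (φ j) t)

/-- `{ψ, Q}` is a normalized discrete rotating wave solution of period `T` of the
`N`-junction Josephson system with LRC load: `ψ` is a running function of period `T`
with `ψ 0 = 0`, and the tuple `φ_j(t) = ψ(t − (j−1)T/N)`, `Q` solves the system. -/
def IsNormalizedDRW (N : ℕ) (β I L R γ : ℝ) (ψ Q : ℝ → ℝ) (T : ℝ) : Prop :=
  0 < T ∧ ContDiff ℝ 2 ψ ∧ ContDiff ℝ 2 Q ∧ IsRunning ψ T ∧ ψ 0 = 0 ∧
  JJSystem N β I L R γ (fun j t => ψ (t - ((j : ℕ) : ℝ) * T / (N : ℝ))) Q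


/-- A function has zero mean over `[0, 2π]`, expressed through a primitive. -/
def ZM (f : ℝ → ℝ) : Prop :=
  ∃ F : ℝ → ℝ, (∀ x, HasDerivAt F (f x) x) ∧ F (2 * π) = F 0

lemma ZM.add {f g : ℝ → ℝ} (hf : ZM f) (hg : ZM g) : ZM (fun x => f x + g x) := by
  obtain ⟨F, hF, hF'⟩ := hf
  obtain ⟨G, hG, hG'⟩ := hg
  exact ⟨fun x => F x + G x, fun x => (hF x).add (hG x), by simp [hF', hG']⟩

lemma ZM.cmul {f : ℝ → ℝ} (k : ℝ) (hf : ZM f) : ZM (fun x => k * f x) := by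
  obtain ⟨F, hF, hF'⟩ := hf
  exact ⟨fun x => k * F x, fun x => (hF x).const_mul k, by simp [hF']⟩

lemma ZM.sub {f g : ℝ → ℝ} (hf : ZM f) (hg : ZM g) : ZM (fun x => f x - g x) := by
  obtain ⟨F, hF, hF'⟩ := hf
  obtain ⟨G, hG, hG'⟩ := hg
  exact ⟨fun x => F x - G x, fun x => (hF x).sub (hG x), by simp [hF', hG']⟩

lemma ZM.congr {f g : ℝ → ℝ} (hf : ZM f) (h : ∀ x, g x = f x) : ZM g := by
  have : g = f := funext h
  rwa [this]

lemma ZM.exists_zero {f : ℝ → ℝ} (hf : ZM f) : ∃ x, f x = 0 := by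
  obtain ⟨F, hF, hF'⟩ := hf
  obtain ⟨c, -, hc⟩ := exists_hasDerivAt_eq_zero (f := F) (f' := f) (a := 0) (b := 2 * π)
    (by positivity) (fun x _ => (hF x).continuousAt.continuousWithinAt) hF'.symm
    (fun x _ => hF x)
  exact ⟨c, hc⟩

lemma mvt_le {f f' : ℝ → ℝ} (hf : ∀ x, HasDerivAt f (f' x) x) {a b C : ℝ} (hab : a ≤ b)
    (hC : ∀ x, a ≤ x → x ≤ b → f' x ≤ C) : f b - f a ≤ C * (b - a) := by
  rcases hab.eq_or_lt with h | h
  · subst h; simp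
  · obtain ⟨c, hc, hc'⟩ := exists_hasDerivAt_eq_slope f f' h
      (fun x _ => (hf x).continuousAt.continuousWithinAt) (fun x _ => hf x)
    have h1 := hC c hc.1.le hc.2.le
    rw [hc', div_le_iff₀ (by linarith)] at h1
    exact h1

lemma mvt_ge {f f' : ℝ → ℝ} (hf : ∀ x, HasDerivAt f (f' x) x) {a b C : ℝ} (hab : a ≤ b)
    (hC : ∀ x, a ≤ x → x ≤ b → C ≤ f' x) : C * (b - a) ≤ f b - f a := by
  have := mvt_le (f := fun x => - f x) (f' := fun x => - f' x) (fun x => (hf x).neg) hab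
    (C := -C) (fun x h1 h2 => by have := hC x h1 h2; linarith)
  linarith

lemma lip_bound {f f' : ℝ → ℝ} (hf : ∀ x, HasDerivAt f (f' x) x) {C : ℝ}
    (hC : ∀ x, |f' x| ≤ C) (a b : ℝ) : |f a - f b| ≤ C * |a - b| := by
  wlog hab : b ≤ a generalizing a b
  · rw [abs_sub_comm, abs_sub_comm a b]
    exact this b a (le_of_not_ge hab)
  rw [abs_of_nonneg (sub_nonneg.2 hab), abs_le]
  constructor
  · have := mvt_ge hf hab (C := -C) (fun x _ _ => (abs_le.1 (hC x)).1)
    linarith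
  · exact mvt_le hf hab (fun x _ _ => (abs_le.1 (hC x)).2)

lemma per_max {f : ℝ → ℝ} {c : ℝ} (hf : Continuous f) (hp : Function.Periodic f c)
    (hc : 0 < c) : ∃ x0, ∀ x, f x ≤ f x0 := by
  obtain ⟨x0, -, h0⟩ := isCompact_Icc.exists_isMaxOn (s := Set.Icc (0:ℝ) c)
    (Set.nonempty_Icc.2 hc.le) hf.continuousOn
  refine ⟨x0, fun x => ?_⟩
  obtain ⟨y, hy, hxy⟩ := hp.exists_mem_Ico₀ hc x
  rw [hxy]
  exact h0 ⟨hy.1, hy.2.le⟩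

lemma per_min {f : ℝ → ℝ} {c : ℝ} (hf : Continuous f) (hp : Function.Periodic f c)
    (hc : 0 < c) : ∃ x0, ∀ x, f x0 ≤ f x := by
  obtain ⟨x0, h⟩ := per_max (f := fun x => - f x) hf.neg (fun x => by simp [hp x]) hc
  exact ⟨x0, fun x => by have := h x; linarith⟩

lemma per_abs {f : ℝ → ℝ} {c : ℝ} (hf : Continuous f) (hp : Function.Periodic f c)
    (hc : 0 < c) : ∃ x0, ∀ x, |f x| ≤ |f x0| :=
  per_max (f := fun x => |f x|) hf.abs (fun x => by simp [hp x]) hc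

lemma zm_bound {f f' : ℝ → ℝ} (hf : ∀ x, HasDerivAt f (f' x) x) {h K : ℝ} (hh : 0 < h)
    (hp : Function.Periodic f h) (hz : ∃ x, f x = 0) (hK : ∀ x, |f' x| ≤ K) (x : ℝ) :
    |f x| ≤ h * K := by
  obtain ⟨ξ, hξ⟩ := hz
  obtain ⟨y, hy, hxy⟩ := hp.exists_mem_Ico hh x ξ
  rw [hxy]
  have h1 := lip_bound hf hK y ξ
  rw [hξ, sub_zero] at h1
  have hK0 : 0 ≤ K := (abs_nonneg _).trans (hK 0)
  have h2 : |y - ξ| ≤ h := by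
    rw [abs_of_nonneg (by linarith [hy.1])]; linarith [hy.2]
  calc |f y| ≤ K * |y - ξ| := h1
    _ ≤ K * h := by gcongr
    _ = h * K := mul_comm _ _

lemma cont_of {f f' : ℝ → ℝ} (hf : ∀ x, HasDerivAt f (f' x) x) : Continuous f :=
  continuous_iff_continuousAt.2 fun x => (hf x).continuousAt

lemma core_pos {k h X S : ℝ} (hX : X ≤ 3 * h * k * (S + X)) (hS : 0 ≤ S) (hX0 : 0 ≤ X)
    (hk : 0 < k) (hh : h ≤ 1 / (6 * k)) : X ≤ S := by
  have : h * k ≤ 1 / 6 := by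
    calc h * k ≤ 1 / (6 * k) * k := by gcongr
      _ = 1 / 6 := by field_simp
  nlinarith [mul_nonneg (sub_nonneg.2 this) (add_nonneg hS hX0)]

set_option maxHeartbeats 1000000 in
/-- The linear fast-oscillation estimate, in terms of sup norms. -/
lemma lin_sup (β L R γ ω₀ : ℝ) (hβ : 0 < β) (hL : 0 ≤ L) (hR : 0 ≤ R) (hγ : 0 ≤ γ)
    (hRγ : γ ≠ 0 ∨ R ≠ 0) (hω₀ : 0 < ω₀) :
    ∃ C > 0, ∃ h₀ > 0, ∀ (ω h S : ℝ) (a a1 b b1 e e1 : ℝ → ℝ), ω₀ ≤ ω → 0 < h → h ≤ h₀ →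
      0 ≤ S → (∀ x, HasDerivAt a (a1 x) x) → (∀ x, HasDerivAt b (b1 x) x) →
      (∀ x, HasDerivAt e (e1 x) x) → Function.Periodic a h → Function.Periodic b h →
      Function.Periodic e h → ZM a → ZM b → ZM e →
      (∀ x, |β * ω * a1 x + a x + b x| ≤ S) →
      (∀ x, |L * ω * b1 x + R * b x + e x - a x| ≤ L * S) →
      (∀ x, |ω * e1 x - γ * b x| ≤ S) →
      ∀ x, |a x| ≤ C * S ∧ |b x| ≤ C * S ∧ |e x| ≤ C * S := by
  -- the general bounds for `a` and `e`
  have key : ∀ (ω h S : ℝ) (a a1 b b1 e e1 : ℝ → ℝ), ω₀ ≤ ω → 0 < h →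
      0 ≤ S → (∀ x, HasDerivAt a (a1 x) x) → (∀ x, HasDerivAt b (b1 x) x) →
      (∀ x, HasDerivAt e (e1 x) x) → Function.Periodic a h → Function.Periodic b h →
      Function.Periodic e h → ZM a → ZM b → ZM e →
      (∀ x, |β * ω * a1 x + a x + b x| ≤ S) →
      (∀ x, |L * ω * b1 x + R * b x + e x - a x| ≤ L * S) →
      (∀ x, |ω * e1 x - γ * b x| ≤ S) →
      ∃ A B E : ℝ, 0 ≤ A ∧ 0 ≤ B ∧ 0 ≤ E ∧ (∀ x, |a x| ≤ A) ∧ (∀ x, |b x| ≤ B) ∧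
        (∀ x, |e x| ≤ E) ∧ (∃ x, |b x| = B) ∧
        A ≤ h * ((S + A + B) / (β * ω₀)) ∧ E ≤ h * ((S + γ * B) / ω₀) ∧
        (0 < L → B ≤ h * ((L * S + R * B + E + A) / (L * ω₀))) := by
    intro ω h S a a1 b b1 e e1 hω hh hS ha hb he pa pb pe za zb ze e1' e2' e3'
    have hω' : 0 < ω := by linarith
    obtain ⟨xa, hxa⟩ := per_abs (cont_of ha) pa hh
    obtain ⟨xb, hxb⟩ := per_abs (cont_of hb) pb hh
    obtain ⟨xe, hxe⟩ := per_abs (cont_of he) pe hh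
    have aux : ∀ (k d r : ℝ) (k₀ : ℝ), 0 < k₀ → k₀ ≤ k → |k * d| ≤ r → |d| ≤ r / k₀ := by
      intro k d r k₀ h0 h1 h2
      rw [abs_mul, abs_of_pos (by linarith)] at h2
      rw [le_div_iff₀ h0]
      nlinarith [abs_nonneg d]
    refine ⟨|a xa|, |b xb|, |e xe|, abs_nonneg _, abs_nonneg _, abs_nonneg _, hxa, hxb, hxe,
      ⟨xb, rfl⟩, ?_, ?_, ?_⟩
    · refine zm_bound ha hh pa za.exists_zero (fun x => ?_) xa
      refine aux (β * ω) _ _ _ (by positivity) (by gcongr) ?_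
      have h1 := abs_le.1 (e1' x)
      have h2 := abs_le.1 (hxa x)
      have h3 := abs_le.1 (hxb x)
      rw [abs_le]; constructor <;> linarith [h1.1, h1.2, h2.1, h2.2, h3.1, h3.2]
    · refine zm_bound he hh pe ze.exists_zero (fun x => ?_) xe
      refine aux ω _ _ _ (by positivity) hω ?_
      have h1 := abs_le.1 (e3' x)
      have h3 : |γ * b x| ≤ γ * |b xb| := by
        rw [abs_mul, abs_of_nonneg hγ]; exact mul_le_mul_of_nonneg_left (hxb x) hγ
      have h3 := abs_le.1 h3
      rw [abs_le]; constructor <;> linarith [h1.1, h1.2, h3.1, h3.2]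
    · intro hL0
      refine zm_bound hb hh pb zb.exists_zero (fun x => ?_) xb
      refine aux (L * ω) _ _ _ (by positivity) (by gcongr) ?_
      have h1 := abs_le.1 (e2' x)
      have h2 := abs_le.1 (hxa x)
      have h4 := abs_le.1 (hxe x)
      have h3 : |R * b x| ≤ R * |b xb| := by
        rw [abs_mul, abs_of_nonneg hR]; exact mul_le_mul_of_nonneg_left (hxb x) hR
      have h3 := abs_le.1 h3
      rw [abs_le]; constructor <;> linarith [h1.1, h1.2, h2.1, h2.2, h3.1, h3.2, h4.1, h4.2]
  rcases hL.eq_or_lt with hL0 | hL0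
  · -- the case L = 0
    have hB : ∃ K1 > 0, ∀ (ω h S : ℝ) (a a1 b b1 e e1 : ℝ → ℝ), ω₀ ≤ ω →
      0 ≤ S → (∀ x, HasDerivAt a (a1 x) x) → 
      (∀ x, HasDerivAt e (e1 x) x) → 
      (∀ x, |β * ω * a1 x + a x + b x| ≤ S) →
      (∀ x, |L * ω * b1 x + R * b x + e x - a x| ≤ L * S) →
      (∀ x, |ω * e1 x - γ * b x| ≤ S) → ∀ x, |b x| ≤ K1 * (S + |a x| + |e x|) := by
      rcases hR.eq_or_lt with hR0 | hR0
      · refine ⟨1 + β, by positivity, ?_⟩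
        intro ω h S a a1 b b1 e e1 hω hS ha he e1' e2' e3' x
        have hea : e = a := by
          funext t
          have := e2' t
          rw [← hL0, ← hR0] at this
          simp only [zero_mul, zero_add] at this
          have := abs_nonpos_iff.1 this
          linarith
        have h1 : e1 x = a1 x := by
          subst hea
          exact (he x).unique (ha x)
        have h2 := abs_le.1 (e1' x)
        have h3 := abs_le.1 (e3' x)
        rw [h1] at h3
        have h4 : |(1 + β * γ) * b x| ≤ S + |a x| + β * S := by
          have := mul_le_mul_of_nonneg_left h3.1 hβ.le
          have := mul_le_mul_of_nonneg_left h3.2 hβ.le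
          rw [abs_le]
          constructor <;> nlinarith [le_abs_self (a x), neg_abs_le (a x)]
        rw [abs_mul, abs_of_pos (by positivity)] at h4
        have : 0 ≤ β * γ * |b x| := by positivity
        have : 0 ≤ β * |a x| := by positivity
        have : 0 ≤ (1 + β) * |e x| := by positivity
        nlinarith
      · refine ⟨1 / R, by positivity, ?_⟩
        intro ω h S a a1 b b1 e e1 hω hS ha he e1' e2' e3' x
        have := e2' x
        rw [← hL0] at this
        simp only [zero_mul, zero_add] at this
        have := abs_nonpos_iff.1 this
        have h1 : R * b x = a x - e x := by linarith
        have h2 : R * |b x| ≤ |a x| + |e x| := by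
          rw [← abs_of_pos hR0, ← abs_mul, h1]; exact abs_sub _ _
        rw [div_mul_eq_mul_div, le_div_iff₀ hR0]
        linarith
    obtain ⟨K1, hK1, hB⟩ := hB
    set K := 1 / (β * ω₀) + (1 + γ) / ω₀ with hK
    have hKpos : 0 < K := by positivity
    refine ⟨1 + 2 * K1, by positivity, 1 / (6 * (K * (1 + K1))), by positivity, ?_⟩
    intro ω h S a a1 b b1 e e1 hω hh hh0 hS ha hb he pa pb pe za zb ze e1' e2' e3' x
    obtain ⟨A, B, E, hA, hB0, hE, hAx, hBx, hEx, ⟨xb, hxb⟩, iA, iE, -⟩ :=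
      key ω h S a a1 b b1 e e1 hω hh hS ha hb he pa pb pe za zb ze e1' e2' e3'
    have hB1 : B ≤ K1 * (S + A + E) := by
      rw [← hxb]
      refine (hB ω h S a a1 b b1 e e1 hω hS ha he e1' e2' e3' xb).trans ?_
      have := hAx xb
      have := hEx xb
      gcongr
    have i1 : (S + A + B) / (β * ω₀) ≤ K * (S + A + B) := by
      rw [hK, add_mul, div_eq_mul_one_div, mul_comm]
      have : 0 ≤ (1 + γ) / ω₀ * (S + A + B) := by positivity
      linarith
    have i2 : (S + γ * B) / ω₀ ≤ K * (S + A + B) := by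
      have h1 : (S + γ * B) / ω₀ ≤ (1 + γ) / ω₀ * (S + A + B) := by
        rw [div_mul_eq_mul_div]
        gcongr
        linarith [mul_nonneg hγ hS, mul_nonneg hγ hA]
      have : 0 ≤ 1 / (β * ω₀) * (S + A + B) := by positivity
      rw [hK, add_mul]; linarith
    have i3 : K * (S + A + B) ≤ K * (1 + K1) * (S + (A + E)) := by
      rw [mul_assoc]
      gcongr
      nlinarith
    have i4 : A + E ≤ 3 * h * (K * (1 + K1)) * (S + (A + E)) := by
      have h1 : A ≤ h * (K * (1 + K1) * (S + (A + E))) := iA.trans (by gcongr; linarith)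
      have h2 : E ≤ h * (K * (1 + K1) * (S + (A + E))) := iE.trans (by gcongr; linarith)
      have h3 : 0 ≤ h * (K * (1 + K1) * (S + (A + E))) := by positivity
      linarith
    have i5 := core_pos i4 hS (by positivity) (by positivity) hh0
    have i6 : B ≤ 2 * K1 * S := by nlinarith
    have i7 : 0 ≤ K1 * S := by positivity
    refine ⟨(hAx x).trans ?_, (hBx x).trans ?_, (hEx x).trans ?_⟩ <;> linarith
  · set K := 1 / (β * ω₀) + (1 + γ) / ω₀ + (L + R + 1) / (L * ω₀) with hK
    have hKpos : 0 < K := by positivity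
    refine ⟨1, by positivity, 1 / (6 * K), by positivity, ?_⟩
    intro ω h S a a1 b b1 e e1 hω hh hh0 hS ha hb he pa pb pe za zb ze e1' e2' e3' x
    obtain ⟨A, B, E, hA, hB0, hE, hAx, hBx, hEx, ⟨xb, hxb⟩, iA, iE, iB⟩ :=
      key ω h S a a1 b b1 e e1 hω hh hS ha hb he pa pb pe za zb ze e1' e2' e3'
    have iB := iB hL0
    have p1 : 0 ≤ 1 / (β * ω₀) * (S + (A + B + E)) := by positivity
    have p2 : 0 ≤ (1 + γ) / ω₀ * (S + (A + B + E)) := by positivity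
    have p3 : 0 ≤ (L + R + 1) / (L * ω₀) * (S + (A + B + E)) := by positivity
    have i1 : (S + A + B) / (β * ω₀) ≤ K * (S + (A + B + E)) := by
      have h1 : (S + A + B) / (β * ω₀) ≤ 1 / (β * ω₀) * (S + (A + B + E)) := by
        rw [div_mul_eq_mul_div]
        gcongr
        linarith
      rw [hK, add_mul, add_mul]; linarith
    have i2 : (S + γ * B) / ω₀ ≤ K * (S + (A + B + E)) := by
      have h1 : (S + γ * B) / ω₀ ≤ (1 + γ) / ω₀ * (S + (A + B + E)) := by
        rw [div_mul_eq_mul_div]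
        gcongr
        linarith [mul_nonneg hγ hS, mul_nonneg hγ hA, mul_nonneg hγ hE]
      rw [hK, add_mul, add_mul]; linarith
    have i3 : (L * S + R * B + E + A) / (L * ω₀) ≤ K * (S + (A + B + E)) := by
      have h1 : (L * S + R * B + E + A) / (L * ω₀) ≤
          (L + R + 1) / (L * ω₀) * (S + (A + B + E)) := by
        rw [div_mul_eq_mul_div]
        gcongr
        linarith [mul_nonneg hR hS, mul_nonneg hR hA, mul_nonneg hR hE, mul_nonneg hL hA,
          mul_nonneg hL hE, mul_nonneg hL hB0]
      rw [hK, add_mul, add_mul]; linarith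
    have i4 : A + B + E ≤ 3 * h * K * (S + (A + B + E)) := by
      have h1 := iA.trans (mul_le_mul_of_nonneg_left i1 hh.le)
      have h2 := iE.trans (mul_le_mul_of_nonneg_left i2 hh.le)
      have h3 := iB.trans (mul_le_mul_of_nonneg_left i3 hh.le)
      linarith
    have i5 := core_pos i4 hS (by positivity) (by positivity) hh0
    refine ⟨(hAx x).trans ?_, (hBx x).trans ?_, (hEx x).trans ?_⟩ <;> linarith

/-- The linear fast-oscillation estimate including derivatives. -/
lemma lin_est (β L R γ ω₀ : ℝ) (hβ : 0 < β) (hL : 0 ≤ L) (hR : 0 ≤ R) (hγ : 0 ≤ γ)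
    (hRγ : γ ≠ 0 ∨ R ≠ 0) (hω₀ : 0 < ω₀) :
    ∃ C > 0, ∃ h₀ > 0, ∀ (ω h S : ℝ) (a a1 b b1 e e1 : ℝ → ℝ), ω₀ ≤ ω → 0 < h → h ≤ h₀ →
      0 ≤ S → (∀ x, HasDerivAt a (a1 x) x) → (∀ x, HasDerivAt b (b1 x) x) →
      (∀ x, HasDerivAt e (e1 x) x) → Function.Periodic a h → Function.Periodic b h →
      Function.Periodic e h → ZM a → ZM b → ZM e →
      (∀ x, |β * ω * a1 x + a x + b x| ≤ S) →
      (∀ x, |L * ω * b1 x + R * b x + e x - a x| ≤ L * S) →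
      (∀ x, |ω * e1 x - γ * b x| ≤ S) →
      ∀ x, |b x| ≤ C * S ∧ |a1 x| ≤ C * S ∧ |e1 x| ≤ C * S ∧ L * |b1 x| ≤ C * S := by
  obtain ⟨C, hC, h₀, hh₀, H⟩ := lin_sup β L R γ ω₀ hβ hL hR hγ hRγ hω₀
  refine ⟨C + (1 + C + C) / (β * ω₀) + (1 + γ * C) / ω₀ + (L + R * C + C + C) / ω₀,
    by positivity, h₀, hh₀, ?_⟩
  intro ω h S a a1 b b1 e e1 hω hh hh0 hS ha hb he pa pb pe za zb ze e1' e2' e3' x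
  obtain ⟨h1, h2, h3⟩ :=
    H ω h S a a1 b b1 e e1 hω hh hh0 hS ha hb he pa pb pe za zb ze e1' e2' e3' x
  have aux : ∀ (k d r : ℝ) (k₀ : ℝ), 0 < k₀ → k₀ ≤ k → |k * d| ≤ r → |d| ≤ r / k₀ := by
    intro k d r k₀ h0 h1 h2
    rw [abs_mul, abs_of_pos (by linarith)] at h2
    rw [le_div_iff₀ h0]
    nlinarith [abs_nonneg d]
  have q1 : 0 ≤ (1 + C + C) / (β * ω₀) * S := by positivity
  have q2 : 0 ≤ (1 + γ * C) / ω₀ * S := by positivity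
  have q3 : 0 ≤ (L + R * C + C + C) / ω₀ * S := by positivity
  have q4 : 0 ≤ C * S := by positivity
  simp only [add_mul _ _ S]
  have h1' := abs_le.1 h1
  have h2' := abs_le.1 h2
  have h3' := abs_le.1 h3
  have E1 := abs_le.1 (e1' x)
  have E2 := abs_le.1 (e2' x)
  have E3 := abs_le.1 (e3' x)
  have hω' : 0 < ω := by linarith
  have hRb : |R * b x| ≤ R * (C * S) := by
    rw [abs_mul, abs_of_nonneg hR]; exact mul_le_mul_of_nonneg_left h2 hR
  have hγb : |γ * b x| ≤ γ * (C * S) := by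
    rw [abs_mul, abs_of_nonneg hγ]; exact mul_le_mul_of_nonneg_left h2 hγ
  have hRb := abs_le.1 hRb
  have hγb := abs_le.1 hγb
  refine ⟨by linarith, ?_, ?_, ?_⟩
  · have := aux (β * ω) (a1 x) ((1 + C + C) * S) (β * ω₀) (by positivity) (by gcongr)
      (by rw [abs_le]; constructor <;> linarith [h1'.1, h1'.2, h2'.1, h2'.2, E1.1, E1.2])
    rw [mul_div_right_comm] at this
    linarith
  · have := aux ω (e1 x) ((1 + γ * C) * S) ω₀ (by positivity) hω
      (by rw [abs_le]; constructor <;> linarith [hγb.1, hγb.2, E3.1, E3.2])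
    rw [mul_div_right_comm] at this
    linarith
  · have := aux ω (L * b1 x) ((L + R * C + C + C) * S) ω₀ (by positivity) hω
      (by rw [abs_le]; constructor <;>
            linarith [hRb.1, hRb.2, E2.1, E2.2, h1'.1, h1'.2, h3'.1, h3'.2])
    rw [mul_div_right_comm, abs_mul, abs_of_nonneg hL] at this
    linarith

/-- Average over the `N` shifts by multiples of `2π / N`. -/
noncomputable def avgN (N : ℕ) (g : ℝ → ℝ) (x : ℝ) : ℝ :=
  (1 / (N : ℝ)) * ∑ j : Fin N, g (x - ((j : ℕ) : ℝ) * (2 * π / N))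

lemma avgN_deriv (N : ℕ) {g g' : ℝ → ℝ} (hg : ∀ x, HasDerivAt g (g' x) x) (x : ℝ) :
    HasDerivAt (avgN N g) (avgN N g' x) x := by
  unfold avgN
  apply HasDerivAt.const_mul
  apply HasDerivAt.fun_sum
  intro j _
  exact (hg _).comp_sub_const x _

lemma avgN_abs {N : ℕ} (hN : 0 < N) {g : ℝ → ℝ} {K : ℝ} (hg : ∀ x, |g x| ≤ K) (x : ℝ) :
    |avgN N g x| ≤ K := by
  unfold avgN
  have hN' : (0:ℝ) < N := by exact_mod_cast hN
  rw [abs_mul, abs_of_pos (by positivity), one_div, inv_mul_le_iff₀ hN']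
  refine (Finset.abs_sum_le_sum_abs _ _).trans ?_
  refine (Finset.sum_le_sum (fun j _ => hg _)).trans ?_
  simp

lemma avgN_sub (N : ℕ) (f g : ℝ → ℝ) (x : ℝ) :
    avgN N (fun t => f t - g t) x = avgN N f x - avgN N g x := by
  unfold avgN
  rw [Finset.sum_sub_distrib]; ring

lemma avgN_periodic {N : ℕ} (hN : 0 < N) {g : ℝ → ℝ} (hg : Function.Periodic g (2 * π)) :
    Function.Periodic (avgN N g) (2 * π / N) := by
  intro x
  have hN' : (N:ℝ) ≠ 0 := by positivity
  unfold avgN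
  congr 1
  rw [Fin.sum_univ_eq_sum_range (fun j => g (x + 2 * π / N - (j:ℝ) * (2 * π / N))),
    Fin.sum_univ_eq_sum_range (fun j => g (x - (j:ℝ) * (2 * π / N)))]
  obtain ⟨n, rfl⟩ : ∃ n, N = n + 1 := ⟨N - 1, by omega⟩
  rw [Finset.sum_range_succ', Finset.sum_range_succ]
  congr 1
  · apply Finset.sum_congr rfl
    intro j _
    congr 1
    push_cast
    ring
  · rw [← hg (x - _)]
    congr 1
    push_cast at hN' ⊢
    field_simp
    ring

/-- Rescaled solutions: `θ = ω t`. -/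
structure RS (N : ℕ) (β I L R γ κ : ℝ) where
  ω : ℝ
  ψ : ℝ → ℝ
  y : ℝ → ℝ
  z : ℝ → ℝ
  a : ℝ → ℝ
  a1 : ℝ → ℝ
  b : ℝ → ℝ
  b1 : ℝ → ℝ
  e : ℝ → ℝ
  e1 : ℝ → ℝ
  ω_pos : 0 < ω
  hψ : ∀ x, HasDerivAt ψ (y x) x
  hy : ∀ x, HasDerivAt y (z x) x
  eq1 : ∀ x, β * ω ^ 2 * z x + ω * y x + sin (ψ x) + κ * ω + b x = I
  run : ∀ x, ψ (x + 2 * π) = ψ x + 2 * π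
  zero : ψ 0 = 0
  ha : ∀ x, HasDerivAt a (a1 x) x
  hb : ∀ x, HasDerivAt b (b1 x) x
  he : ∀ x, HasDerivAt e (e1 x) x
  pa : Function.Periodic a (2 * π / N)
  pb : Function.Periodic b (2 * π / N)
  pe : Function.Periodic e (2 * π / N)
  za : ZM a
  zb : ZM b
  ze : ZM e
  eqa : ∀ x, β * ω * a1 x + a x + b x +
    (avgN N (fun t => sin (ψ t)) x - (I - (1 + κ) * ω)) = 0
  eqb : ∀ x, L * ω * b1 x + R * b x + e x - a x = 0
  eqe : ∀ x, ω * e1 x - γ * b x = 0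

namespace RS

variable {N : ℕ} {β I L R γ κ : ℝ}

lemma per_two_pi {f : ℝ → ℝ} (hN : 0 < N) (h : Function.Periodic f (2 * π / N)) :
    Function.Periodic f (2 * π) := by
  have := h.nat_mul N
  have hN' : (N:ℝ) ≠ 0 := by positivity
  rwa [mul_div_cancel₀ _ hN'] at this

/-- The oscillating part of the averaged sine. -/
noncomputable def S (s : RS N β I L R γ κ) (x : ℝ) : ℝ :=
  avgN N (fun t => sin (s.ψ t)) x - (I - (1 + κ) * s.ω)

/-- The derivative of `S`. -/
noncomputable def S1 (s : RS N β I L R γ κ) (x : ℝ) : ℝ :=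
  avgN N (fun t => cos (s.ψ t) * s.y t) x

lemma zS (s : RS N β I L R γ κ) (hN : 0 < N) : ZM s.S := by
  have h1 : ZM s.a1 := ⟨s.a, s.ha, by
    have := per_two_pi hN s.pa 0
    rwa [zero_add] at this⟩
  refine ((((h1.cmul (β * s.ω)).add s.za).add s.zb).cmul (-1)).congr (fun x => ?_)
  have := s.eqa x
  simp only [S]
  linarith

lemma yper (s : RS N β I L R γ κ) : Function.Periodic s.y (2 * π) := by
  intro x
  have h1 : HasDerivAt (fun t => s.ψ (t + 2 * π)) (s.y (x + 2 * π)) x :=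
    (s.hψ (x + 2 * π)).comp_add_const x _
  have h2 : HasDerivAt (fun t => s.ψ (t + 2 * π)) (s.y x) x := by
    have := (s.hψ x).add_const (2 * π)
    simpa only [s.run] using this
  exact h1.unique h2

lemma pS (s : RS N β I L R γ κ) (hN : 0 < N) : Function.Periodic s.S (2 * π / N) := by
  intro x
  have := avgN_periodic hN (g := fun t => sin (s.ψ t)) (fun t => by simp [s.run]) x
  simp only [S, this]

lemma pS1 (s : RS N β I L R γ κ) (hN : 0 < N) : Function.Periodic s.S1 (2 * π / N) :=
  avgN_periodic hN (g := fun t => cos (s.ψ t) * s.y t) (fun t => by simp [s.run, s.yper t])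

lemma hS (s : RS N β I L R γ κ) (x : ℝ) : HasDerivAt s.S (s.S1 x) x := by
  have := avgN_deriv N (g := fun t => sin (s.ψ t)) (g' := fun t => cos (s.ψ t) * s.y t)
    (fun t => (s.hψ t).sin) x
  exact this.sub_const _

lemma hS1 (s : RS N β I L R γ κ) (x : ℝ) : HasDerivAt s.S1
    (avgN N (fun t => -sin (s.ψ t) * s.y t * s.y t + cos (s.ψ t) * s.z t) x) x :=
  avgN_deriv N (fun t => ((s.hψ t).cos).mul (s.hy t)) x

lemma zS1 (s : RS N β I L R γ κ) (hN : 0 < N) : ZM s.S1 :=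
  ⟨s.S, s.hS, by
    have := per_two_pi hN (s.pS hN) 0
    rwa [zero_add] at this⟩

lemma avg_sin_le (s : RS N β I L R γ κ) (hN : 0 < N) (x : ℝ) :
    |avgN N (fun t => sin (s.ψ t)) x| ≤ 1 := avgN_abs hN (fun t => abs_sin_le_one _) x

lemma omega_bounds (s : RS N β I L R γ κ) (hN : 0 < N) :
    I - 1 ≤ (1 + κ) * s.ω ∧ (1 + κ) * s.ω ≤ I + 1 := by
  obtain ⟨x, hx⟩ := (s.zS hN).exists_zero
  have h1 := abs_le.1 (s.avg_sin_le hN x)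
  simp only [S] at hx
  constructor <;> linarith [h1.1, h1.2]

lemma S_le_two (s : RS N β I L R γ κ) (hN : 0 < N) (x : ℝ) : |s.S x| ≤ 2 := by
  obtain ⟨x0, hx⟩ := (s.zS hN).exists_zero
  have h1 := abs_le.1 (s.avg_sin_le hN x)
  have h2 := abs_le.1 (s.avg_sin_le hN x0)
  simp only [S] at hx ⊢
  rw [abs_le]
  constructor <;> linarith [h1.1, h1.2, h2.1, h2.2]

end RS

lemma h_pos {N : ℕ} (hN : 0 < N) : 0 < 2 * π / (N:ℝ) := by
  have : (0:ℝ) < N := by exact_mod_cast hN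
  positivity

/-- The parameter bounds for the frequency. -/
lemma omega_range (β I L R γ κ : ℝ) (hI : 1 < I) (hκ : 0 ≤ κ) :
    ∃ ω₀ > 0, ∃ ω₁ ≥ ω₀, ∀ N : ℕ, 0 < N → ∀ s : RS N β I L R γ κ, ω₀ ≤ s.ω ∧ s.ω ≤ ω₁ := by
  refine ⟨(I - 1) / (1 + κ), by apply div_pos <;> linarith, (I + 1) / (1 + κ), ?_, ?_⟩
  · show _ ≤ _
    gcongr
    linarith
  · intro N hN s
    obtain ⟨h1, h2⟩ := s.omega_bounds hN
    constructor
    · rw [div_le_iff₀ (by linarith)]; linarith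
    · rw [le_div_iff₀ (by linarith)]; linarith

lemma apriori (β I L R γ κ : ℝ) (hβ : 0 < β) (hI : 1 < I) (hκ : 0 ≤ κ)
    (hL : 0 ≤ L) (hR : 0 ≤ R) (hγ : 0 ≤ γ) (hRγ : γ ≠ 0 ∨ R ≠ 0) :
    ∃ M ≥ 1, ∃ h₀ > 0, ∀ N : ℕ, 0 < N → 2 * π / (N:ℝ) ≤ h₀ → ∀ s : RS N β I L R γ κ,
      ∀ x, |s.y x| ≤ M ∧ |s.z x| ≤ M := by
  obtain ⟨ω₀, hω₀, ω₁, hω₁, hω⟩ := omega_range β I L R γ κ hI hκ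
  obtain ⟨C, hC, h₀, hh₀, H⟩ := lin_est β L R γ ω₀ hβ hL hR hγ hRγ hω₀
  have hω₁' : 0 < ω₁ := by linarith
  set A := I + 1 + κ * ω₁ + C * 2 with hA
  have hA0 : 0 < A := by
    have : 0 ≤ κ * ω₁ := by positivity
    linarith
  set M₁ := A / ω₀ with hM₁
  have hM₁0 : 0 < M₁ := by positivity
  set M₂ := (A + ω₁ * M₁) / (β * ω₀ ^ 2) with hM₂
  have hM₂0 : 0 < M₂ := by positivity
  refine ⟨1 + M₁ + M₂, by show _ ≤ _; linarith, h₀, hh₀, ?_⟩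
  intro N hN hh s
  obtain ⟨hw0, hw1⟩ := hω N hN s
  have hb : ∀ x, |s.b x| ≤ C * 2 := fun x =>
    (H s.ω (2 * π / N) 2 s.a s.a1 s.b s.b1 s.e s.e1 hw0 (h_pos hN) hh (by norm_num) s.ha s.hb
      s.he s.pa s.pb s.pe s.za s.zb s.ze
      (fun t => by
        have h1 := s.eqa t
        have h2 := s.S_le_two hN t
        have h3 : β * s.ω * s.a1 t + s.a t + s.b t = - s.S t := by
          simp only [RS.S]; linarith
        rw [h3, abs_neg]; exact h2)
      (fun t => by rw [s.eqb t]; simp; positivity)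
      (fun t => by rw [s.eqe t]; simp) x).1
  have hκω : κ * s.ω ≤ κ * ω₁ := by gcongr
  have hκω0 : 0 ≤ κ * s.ω := mul_nonneg hκ s.ω_pos.le
  have ycont := cont_of s.hy
  have hyM : ∀ x, |s.y x| ≤ M₁ := by
    intro x
    rw [abs_le]
    constructor
    · obtain ⟨x0, h0⟩ := per_min ycont s.yper (by positivity)
      have hz : s.z x0 = 0 := by
        have : IsLocalMin s.y x0 := Filter.Eventually.of_forall h0
        exact this.hasDerivAt_eq_zero (s.hy x0)
      have h1 := s.eq1 x0
      rw [hz] at h1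
      have h2 := abs_le.1 (hb x0)
      have h3 := sin_le_one (s.ψ x0)
      have h4 : -A ≤ s.ω * s.y x0 := by linarith [h2.1, h2.2]
      refine le_trans ?_ (h0 x)
      by_contra hcon
      push Not at hcon
      have : M₁ * ω₀ = A := by rw [hM₁]; field_simp
      nlinarith
    · obtain ⟨x0, h0⟩ := per_max ycont s.yper (by positivity)
      have hz : s.z x0 = 0 := by
        have : IsLocalMax s.y x0 := Filter.Eventually.of_forall h0
        exact this.hasDerivAt_eq_zero (s.hy x0)
      have h1 := s.eq1 x0
      rw [hz] at h1
      have h2 := abs_le.1 (hb x0)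
      have h3 := neg_one_le_sin (s.ψ x0)
      have h4 : s.ω * s.y x0 ≤ A := by linarith [h2.1, h2.2]
      refine le_trans (h0 x) ?_
      by_contra hcon
      push Not at hcon
      have : M₁ * ω₀ = A := by rw [hM₁]; field_simp
      nlinarith
  intro x
  refine ⟨(hyM x).trans (by linarith), ?_⟩
  have h1 := s.eq1 x
  have h2 := abs_le.1 (hb x)
  have h3 := neg_one_le_sin (s.ψ x)
  have h3' := sin_le_one (s.ψ x)
  have h4 : |s.ω * s.y x| ≤ ω₁ * M₁ := by
    rw [abs_mul, abs_of_pos s.ω_pos]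
    have := hyM x
    gcongr
  have h4 := abs_le.1 h4
  have h5 : |β * s.ω ^ 2 * s.z x| ≤ A + ω₁ * M₁ := by
    rw [abs_le]
    constructor <;> linarith [h2.1, h2.2, h4.1, h4.2]
  rw [abs_mul, abs_of_pos (by have := s.ω_pos; positivity)] at h5
  have h6 : |s.z x| ≤ M₂ := by
    rw [hM₂, le_div_iff₀ (by positivity)]
    refine le_trans ?_ h5
    rw [mul_comm]
    gcongr
  linarith

lemma small_bounds (β I L R γ κ : ℝ) (hβ : 0 < β) (hI : 1 < I) (hκ : 0 ≤ κ)
    (hL : 0 ≤ L) (hR : 0 ≤ R) (hγ : 0 ≤ γ) (hRγ : γ ≠ 0 ∨ R ≠ 0) :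
    ∃ C > 0, ∃ h₀ > 0, ∀ N : ℕ, 0 < N → 2 * π / (N:ℝ) ≤ h₀ → ∀ s : RS N β I L R γ κ,
      ∀ x, |s.b x| ≤ C * (2 * π / N) ∧ |s.a1 x| ≤ C * (2 * π / N) ∧
        |s.e1 x| ≤ C * (2 * π / N) ∧ |s.b1 x| ≤ C * (2 * π / N) := by
  obtain ⟨ω₀, hω₀, ω₁, hω₁, hω⟩ := omega_range β I L R γ κ hI hκ
  obtain ⟨C, hC, h₀, hh₀, H⟩ := lin_est β L R γ ω₀ hβ hL hR hγ hRγ hω₀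
  obtain ⟨M, hM, h₁, hh₁, HM⟩ := apriori β I L R γ κ hβ hI hκ hL hR hγ hRγ
  have hM0 : 0 < M := by linarith
  set M3 := M * M + M with hM3
  have hM30 : 0 < M3 := by positivity
  have hMM3 : M ≤ M3 := by nlinarith
  -- it suffices to treat the derivative of `b`
  have hb1 : ∃ C' > 0, ∀ N : ℕ, 0 < N → ∀ s : RS N β I L R γ κ, ∀ r : ℝ, 0 ≤ r → 
      (∀ x, |s.S1 x| ≤ r) → (∀ x, |s.a1 x| ≤ r) → (∀ x, |s.e1 x| ≤ r) → (∀ x, L * |s.b1 x| ≤ r) →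
      ∀ x, |s.b1 x| ≤ C' * r := by
    rcases hL.eq_or_lt with hL0 | hL0
    · rcases hR.eq_or_lt with hR0 | hR0
      · refine ⟨2, by norm_num, ?_⟩
        intro N hN s r hr hs ha he hb x
        have hea : s.e = s.a := by
          funext t
          have := s.eqb t
          linear_combination this + hL0 * (s.ω * s.b1 t) + hR0 * s.b t
        have h1 : ∀ t, s.e1 t = s.a1 t := by
          intro t
          have h2 := s.he t
          rw [hea] at h2
          exact h2.unique (s.ha t)
        have h2 : ∀ t, (1 + β * γ) * s.b t = -(s.a t + s.S t) := by
          intro t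
          have h3 := s.eqa t
          have h4 := s.eqe t
          rw [h1 t] at h4
          simp only [RS.S]
          linear_combination h3 - β * h4
        have h3 : (1 + β * γ) * s.b1 x = -(s.a1 x + s.S1 x) := by
          have h4 := (s.hb x).const_mul (1 + β * γ)
          have h5 := ((s.ha x).add (s.hS x)).neg
          have h6 : (fun t => (1 + β * γ) * s.b t) = -(s.a + s.S) := by
            funext t; simpa using h2 t
          rw [h6] at h4
          exact h4.unique h5
        have h4 : |(1 + β * γ) * s.b1 x| ≤ 2 * r := by
          rw [h3, abs_neg]
          refine (abs_add_le _ _).trans ?_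
          linarith [ha x, hs x]
        rw [abs_mul, abs_of_pos (by positivity)] at h4
        have : 0 ≤ β * γ * |s.b1 x| := by positivity
        linarith
      · refine ⟨2 / R, by positivity, ?_⟩
        intro N hN s r hr hs ha he hb x
        have h3 : R * s.b1 x = s.a1 x - s.e1 x := by
          have h4 := (s.hb x).const_mul R
          have h5 := (s.ha x).sub (s.he x)
          have h6 : (fun t => R * s.b t) = s.a - s.e := by
            funext t
            have := s.eqb t
            simp only [Pi.sub_apply]
            linear_combination this + hL0 * (s.ω * s.b1 t)
          rw [h6] at h4
          exact h4.unique h5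
        have h4 : |R * s.b1 x| ≤ 2 * r := by
          rw [h3]
          refine (abs_sub _ _).trans ?_
          linarith [ha x, he x]
        rw [abs_mul, abs_of_pos hR0] at h4
        rw [div_mul_eq_mul_div, le_div_iff₀ hR0]
        linarith
    · refine ⟨1 / L, by positivity, ?_⟩
      intro N hN s r hr hs ha he hb x
      rw [div_mul_eq_mul_div, le_div_iff₀ hL0]
      linarith [hb x]
  obtain ⟨C', hC', hb1⟩ := hb1
  refine ⟨C * M + C' * (C * M + M3), by positivity, min h₀ h₁, lt_min hh₀ hh₁, ?_⟩
  intro N hN hh s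
  obtain ⟨hw0, hw1⟩ := hω N hN s
  have HM := HM N hN (hh.trans (min_le_right _ _)) s
  set h := 2 * π / (N:ℝ) with hdef
  have hpos : 0 < h := h_pos hN
  have hS1 : ∀ x, |s.S1 x| ≤ M := by
    apply avgN_abs hN
    intro t
    rw [abs_mul]
    have h1 := abs_cos_le_one (s.ψ t)
    have h2 := (HM t).1
    nlinarith [abs_nonneg (s.y t), abs_nonneg (cos (s.ψ t))]
  have hS : ∀ x, |s.S x| ≤ h * M := zm_bound s.hS hpos (s.pS hN) (s.zS hN).exists_zero hS1
  have hS1' : ∀ x, |s.S1 x| ≤ h * M3 := by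
    refine zm_bound s.hS1 hpos (s.pS1 hN) (s.zS1 hN).exists_zero ?_
    apply avgN_abs hN
    intro t
    have h1 := abs_cos_le_one (s.ψ t)
    have h1' := abs_sin_le_one (s.ψ t)
    have h2 := HM t
    refine (abs_add_le _ _).trans ?_
    simp only [abs_mul, abs_neg]
    have h3 : |sin (s.ψ t)| * |s.y t| * |s.y t| ≤ 1 * M * M := by
      have := h2.1
      gcongr
    have h4 : |cos (s.ψ t)| * |s.z t| ≤ 1 * M := by
      have := h2.2
      gcongr
    linarith
  have main := fun x => H s.ω h (h * M) s.a s.a1 s.b s.b1 s.e s.e1 hw0 hpos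
      (hh.trans (min_le_left _ _)) (by positivity) s.ha s.hb
      s.he s.pa s.pb s.pe s.za s.zb s.ze
      (fun t => by
        have h1 := s.eqa t
        have h3 : β * s.ω * s.a1 t + s.a t + s.b t = - s.S t := by
          simp only [RS.S]; linarith
        rw [h3, abs_neg]; exact hS t)
      (fun t => by rw [s.eqb t]; simp; positivity)
      (fun t => by rw [s.eqe t]; simp; positivity) x
  have e0 : 0 ≤ C * M * h := by positivity
  have e1 : 0 ≤ C' * (C * M + M3) * h := by positivity
  have e2 : 0 ≤ h * M3 := by positivity
  have hb1 := hb1 N hN s ((C * M + M3) * h) (by positivity)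
    (fun x => (hS1' x).trans (by linarith)) (fun x => (main x).2.1.trans (by linarith))
    (fun x => (main x).2.2.1.trans (by linarith)) (fun x => (main x).2.2.2.trans (by linarith))
  intro x
  obtain ⟨m1, m2, m3, m4⟩ := main x
  have := hb1 x
  refine ⟨?_, ?_, ?_, ?_⟩ <;> linarith

/-- No small minimum: if the minimum of `y` is small, Gronwall forbids a rotation. -/
lemma no_small_min {β ω₀ ω₁ ω m ε J : ℝ} (hβ : 0 < β) (hω₀ : 0 < ω₀) (h0 : ω₀ ≤ ω) (h1 : ω ≤ ω₁)
    (hm : 0 < m) (hε : ε ≤ m) {ψ y z b : ℝ → ℝ}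
    (hψ : ∀ x, HasDerivAt ψ (y x) x) (hy : ∀ x, HasDerivAt y (z x) x)
    (eq1 : ∀ x, β * ω ^ 2 * z x + ω * y x + sin (ψ x) + b x = J)
    (run : ∀ x, ψ (x + 2 * π) = ψ x + 2 * π) (hb : ∀ x, |b x| ≤ ε)
    (hsmall : m * (exp ((1 + (1 + ω₁) / (β * ω₀ ^ 2)) * (2 * π)) *
      (1 + (2 + ω₁) / (β * ω₀ ^ 2))) ≤ 1)
    {x0 : ℝ} (hz : z x0 = 0) (hμ : |y x0| ≤ m) : False := by
  have hω : 0 < ω := by linarith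
  have hω₁ : 0 < ω₁ := by linarith
  set q := β * ω₀ ^ 2 with hq
  have hqpos : 0 < q := by positivity
  set K := 1 + (1 + ω₁) / q with hK
  have hK1 : 1 ≤ K := by
    have : 0 ≤ (1 + ω₁) / q := by positivity
    linarith
  set η := (2 + ω₁) * m / q with hη
  have hη0 : 0 ≤ η := by positivity
  set v : ℝ → ℝ × ℝ := fun x => (ψ x - ψ x0, y x) with hv
  have hv' : ∀ x, HasDerivAt v (y x, z x) x := fun x => ((hψ x).sub_const _).prodMk (hy x)
  have vcont : Continuous v := continuous_iff_continuousAt.2 fun x => (hv' x).continuousAt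
  have e0 := eq1 x0
  rw [hz] at e0
  have hωμ : |ω * y x0| ≤ ω₁ * m := by
    rw [abs_mul, abs_of_pos hω]; gcongr
  have bound : ∀ x, ‖((y x, z x) : ℝ × ℝ)‖ ≤ K * ‖v x‖ + η := by
    intro x
    have n1 : |y x| ≤ ‖v x‖ := by
      rw [← Real.norm_eq_abs]; exact norm_snd_le (v x)
    have n2 : |ψ x - ψ x0| ≤ ‖v x‖ := by
      rw [← Real.norm_eq_abs]; exact norm_fst_le (v x)
    have nn := norm_nonneg (v x)
    rw [Prod.norm_def]
    apply max_le
    · rw [Real.norm_eq_abs]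
      simp only
      nlinarith
    · rw [Real.norm_eq_abs]
      simp only
      have hs : |sin (ψ x0) - sin (ψ x)| ≤ ‖v x‖ := by
        refine le_trans ?_ n2
        have := lip_bound (f := sin) (f' := cos) hasDerivAt_sin (C := 1) abs_cos_le_one (ψ x) (ψ x0)
        rw [abs_sub_comm, one_mul] at this
        exact this
      have ex := eq1 x
      have hwy : |ω * y x| ≤ ω₁ * ‖v x‖ := by
        rw [abs_mul, abs_of_pos hω]; gcongr
      have h6 : |β * ω ^ 2 * z x| ≤ (1 + ω₁) * ‖v x‖ + (2 + ω₁) * m := by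
        have a1 := abs_le.1 hs
        have a2 := abs_le.1 hwy
        have a3 := abs_le.1 (hb x)
        have a4 := abs_le.1 (hb x0)
        have a5 := abs_le.1 hωμ
        rw [abs_le]
        constructor <;> linarith [a1.1, a1.2, a2.1, a2.2, a3.1, a3.2, a4.1, a4.2, a5.1, a5.2]
      rw [abs_mul, abs_of_pos (by positivity)] at h6
      have h7 : |z x| ≤ ((1 + ω₁) * ‖v x‖ + (2 + ω₁) * m) / q := by
        rw [le_div_iff₀ hqpos]
        refine le_trans ?_ h6
        rw [mul_comm, hq]
        gcongr
      refine h7.trans ?_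
      have h8 : ((1 + ω₁) * ‖v x‖ + (2 + ω₁) * m) / q = (1 + ω₁) / q * ‖v x‖ + η := by
        rw [hη]; ring
      rw [h8, hK, add_mul]
      linarith
  have hv0 : ‖v x0‖ ≤ m := by
    rw [Prod.norm_def]
    apply max_le
    · simp [hv, hm.le]
    · simpa [hv] using hμ
  have G := norm_le_gronwallBound_of_norm_deriv_right_le (f := v) (f' := fun x => (y x, z x))
    (δ := m) (K := K) (ε := η) (a := x0) (b := x0 + 2 * π) vcont.continuousOn
    (fun x _ => (hv' x).hasDerivWithinAt) hv0 (fun x _ => bound x) (x0 + 2 * π)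
    ⟨by linarith [pi_pos], le_refl _⟩
  have hl : 2 * π ≤ ‖v (x0 + 2 * π)‖ := by
    refine le_trans ?_ (norm_fst_le _)
    simp only [hv, run, Real.norm_eq_abs]
    rw [add_sub_cancel_left]
    exact le_abs_self _
  rw [gronwallBound_of_K_ne_0 (by linarith), add_sub_cancel_left] at G
  set X := exp (K * (2 * π)) with hX
  have hX1 : 1 ≤ X := by
    apply Real.one_le_exp; positivity
  have h8 : η / K * (X - 1) ≤ η * X := by
    have : η / K ≤ η := div_le_self hη0 hK1
    have h0 : 0 ≤ η / K := by positivity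
    nlinarith
  have h9 : m * X + η * X = m * (X * (1 + (2 + ω₁) / q)) := by
    rw [hη]; field_simp
  linarith [pi_gt_three]

/-- No negative minimum: the energy argument. -/
lemma no_neg_min {β ω₀ ω m ε J M : ℝ} (hβ : 0 < β) (hω₀ : 0 < ω₀) (h0 : ω₀ ≤ ω)
    (hm : 0 < m) (hmM : m ≤ M) {ψ y z b : ℝ → ℝ}
    (hψ : ∀ x, HasDerivAt ψ (y x) x) (hy : ∀ x, HasDerivAt y (z x) x)
    (eq1 : ∀ x, β * ω ^ 2 * z x + ω * y x + sin (ψ x) + b x = J)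
    (run : ∀ x, ψ (x + 2 * π) = ψ x + 2 * π) (hb : ∀ x, |b x| ≤ ε)
    (hyM : ∀ x, |y x| ≤ M) (hzM : ∀ x, |z x| ≤ M)
    (hsmall : ε * M * (6 * π) < ω₀ * m ^ 2 / 4 * (m / (2 * M)))
    {x0 : ℝ} (hμ : y x0 ≤ -m) : False := by
  have hω : 0 < ω := by linarith
  have hM : 0 < M := by linarith
  have hε : 0 ≤ ε := (abs_nonneg _).trans (hb 0)
  set δ := m / (2 * M) with hδ
  have hδ0 : 0 < δ := by positivity
  have hδ1 : δ ≤ 1 := by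
    rw [hδ, div_le_one (by positivity)]; linarith
  have hMδ : M * δ = m / 2 := by rw [hδ]; field_simp
  have hpi := pi_gt_three
  -- near `x0` the velocity is negative
  have hneg : ∀ x, x0 - δ ≤ x → x ≤ x0 → y x ≤ -(m / 2) := by
    intro x hx1 hx2
    have := lip_bound hy hzM x x0
    have h2 : |x - x0| ≤ δ := by rw [abs_le]; constructor <;> linarith
    have h3 : M * |x - x0| ≤ M * δ := by gcongr
    have := (abs_le.1 this).2
    linarith
  have hψc := cont_of hψ
  have hdrop : ψ x0 < ψ (x0 - δ) := by
    have := mvt_le hψ (a := x0 - δ) (b := x0) (by linarith) hneg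
    have : 0 < m / 2 * δ := by positivity
    linarith
  obtain ⟨c, hc, hcmax⟩ := isCompact_Icc.exists_isMaxOn (s := Set.Icc (x0 - 2 * π) x0)
    (Set.nonempty_Icc.2 (by linarith)) hψc.continuousOn
  have hcx : ψ (x0 - δ) ≤ ψ c := hcmax ⟨by linarith, by linarith⟩
  have hrun := run (x0 - 2 * π)
  rw [sub_add_cancel] at hrun
  have hc1 : x0 - 2 * π ≠ c := by
    intro h; rw [← h] at hcx; linarith
  have hc2 : c ≠ x0 := by
    intro h; rw [h] at hcx; linarith
  have hc1' : x0 - 2 * π < c := lt_of_le_of_ne hc.1 hc1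
  have hc2' : c < x0 := lt_of_le_of_ne hc.2 hc2
  have hyc : y c = 0 := by
    have : IsLocalMax ψ c := hcmax.isLocalMax (Icc_mem_nhds hc1' hc2')
    exact this.hasDerivAt_eq_zero (hψ c)
  have hcδ : c < x0 - δ := by
    by_contra hcon
    push Not at hcon
    have := hneg c hcon hc2'.le
    linarith
  obtain ⟨d, hd, hdc⟩ := intermediate_value_Icc (a := x0) (b := c + 2 * π) (by linarith)
    (hψc.continuousOn) (show ψ c ∈ Set.Icc (ψ x0) (ψ (c + 2 * π)) from
      ⟨by linarith, by rw [run]; linarith⟩)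
  -- the energy
  set E : ℝ → ℝ := fun x => β * ω ^ 2 / 2 * (y x) ^ 2 - cos (ψ x) - J * ψ x with hE
  have hE' : ∀ x, HasDerivAt E (-(ω * (y x) ^ 2) - y x * b x) x := by
    intro x
    have h1 := ((((hy x).fun_pow 2).const_mul (β * ω ^ 2 / 2)).sub ((hψ x).cos)).sub
      ((hψ x).const_mul J)
    refine h1.congr_deriv ?_
    rw [← eq1 x]
    push_cast
    ring
  have hyb : ∀ x, - (y x * b x) ≤ ε * M := by
    intro x
    have : |y x * b x| ≤ M * ε := by
      rw [abs_mul]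
      have := hb x
      have := hyM x
      gcongr
    have := (abs_le.1 this).1
    linarith
  have hEM : ∀ x, -(ω * (y x) ^ 2) - y x * b x ≤ ε * M := by
    intro x
    have := hyb x
    have : 0 ≤ ω * (y x) ^ 2 := by positivity
    linarith
  have s1 := mvt_le hE' (a := c) (b := x0 - δ) hcδ.le (fun x _ _ => hEM x)
  have s2 := mvt_le hE' (a := x0 - δ) (b := x0) (C := ε * M - ω₀ * m ^ 2 / 4) (by linarith)
    (fun x hx1 hx2 => by
      have h1 := hneg x hx1 hx2
      have h2 : (m / 2) ^ 2 ≤ (y x) ^ 2 := by nlinarith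
      have h3 : ω₀ * (m / 2) ^ 2 ≤ ω * (y x) ^ 2 := by gcongr
      have := hyb x
      linarith)
  have s3 := mvt_le hE' (a := x0) (b := d) hd.1 (fun x _ _ => hEM x)
  have hEd : 0 ≤ E d - E c := by
    simp only [hE, hdc, hyc]
    have : 0 ≤ β * ω ^ 2 / 2 * y d ^ 2 := by positivity
    linarith
  have hdc' : d - c ≤ 2 * π := by linarith [hd.2]
  have hεM : 0 ≤ ε * M := by positivity
  have hfin : ε * M * (d - c) ≤ ε * M * (2 * π) := by gcongr
  have : 0 ≤ ε * M * (4 * π) := by positivity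
  linarith

lemma positivity_bound (β I L R γ κ : ℝ) (hβ : 0 < β) (hI : 1 < I) (hκ : 0 ≤ κ)
    (hL : 0 ≤ L) (hR : 0 ≤ R) (hγ : 0 ≤ γ) (hRγ : γ ≠ 0 ∨ R ≠ 0) :
    ∃ m > 0, ∃ h₀ > 0, ∀ N : ℕ, 0 < N → 2 * π / (N:ℝ) ≤ h₀ → ∀ s : RS N β I L R γ κ,
      ∀ x, m ≤ s.y x := by
  obtain ⟨ω₀, hω₀, ω₁, hω₁, hω⟩ := omega_range β I L R γ κ hI hκ
  obtain ⟨M, hM, h₁, hh₁, HM⟩ := apriori β I L R γ κ hβ hI hκ hL hR hγ hRγ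
  obtain ⟨C, hC, h₂, hh₂, HC⟩ := small_bounds β I L R γ κ hβ hI hκ hL hR hγ hRγ
  have hM0 : 0 < M := by linarith
  have hω₁' : 0 < ω₁ := by linarith
  set Λ := exp ((1 + (1 + ω₁) / (β * ω₀ ^ 2)) * (2 * π)) *
      (1 + (2 + ω₁) / (β * ω₀ ^ 2)) with hΛ
  have hΛ0 : 0 < Λ := by positivity
  set m := min (1 / Λ) 1 with hm
  have hm0 : 0 < m := lt_min (by positivity) one_pos
  have hmΛ : m * Λ ≤ 1 := by
    calc m * Λ ≤ 1 / Λ * Λ := by gcongr; exact min_le_left _ _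
      _ = 1 := by field_simp
  have hmM : m ≤ M := (min_le_right _ _).trans hM
  set ε₁ := ω₀ * m ^ 2 / 4 * (m / (2 * M)) / (2 * (M * (6 * π))) with hε₁
  have hε₁0 : 0 < ε₁ := by positivity
  set ε := min m ε₁ with hε
  have hε0 : 0 < ε := lt_min hm0 hε₁0
  have hεs : ε * M * (6 * π) < ω₀ * m ^ 2 / 4 * (m / (2 * M)) := by
    have h1 : ε * M * (6 * π) ≤ ε₁ * M * (6 * π) := by gcongr; exact min_le_right _ _
    have h2 : ε₁ * M * (6 * π) = (ω₀ * m ^ 2 / 4 * (m / (2 * M))) / 2 := by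
      rw [hε₁]; field_simp
    have h3 : 0 < ω₀ * m ^ 2 / 4 * (m / (2 * M)) := by positivity
    linarith
  refine ⟨m, hm0, min (min h₁ h₂) (ε / C), lt_min (lt_min hh₁ hh₂) (by positivity), ?_⟩
  intro N hN hh s
  have g1 := hh.trans ((min_le_left _ _).trans (min_le_left _ _))
  have g2 := hh.trans ((min_le_left _ _).trans (min_le_right _ _))
  have g3 := hh.trans (min_le_right _ _)
  obtain ⟨hw0, hw1⟩ := hω N hN s
  have hb : ∀ x, |s.b x| ≤ ε := by
    intro x
    refine (HC N hN g2 s x).1.trans ?_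
    rw [le_div_iff₀ hC] at g3
    linarith
  obtain ⟨x0, hx0⟩ := per_min (cont_of s.hy) s.yper (by positivity)
  have hz : s.z x0 = 0 := by
    have : IsLocalMin s.y x0 := Filter.Eventually.of_forall hx0
    exact this.hasDerivAt_eq_zero (s.hy x0)
  have eq1 : ∀ x, β * s.ω ^ 2 * s.z x + s.ω * s.y x + sin (s.ψ x) + s.b x = I - κ * s.ω := by
    intro x
    have := s.eq1 x
    linarith
  intro x
  refine le_trans ?_ (hx0 x)
  by_contra hcon
  push Not at hcon
  rcases le_total (s.y x0) (-m) with h | h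
  · exact no_neg_min hβ hω₀ hw0 hm0 hmM s.hψ s.hy eq1 s.run hb
      (fun x => (HM N hN g1 s x).1) (fun x => (HM N hN g1 s x).2) hεs h
  · exact no_small_min hβ hω₀ hw0 hw1 hm0 (min_le_left _ _) s.hψ s.hy eq1 s.run hb hmΛ hz
      (abs_le.2 ⟨h, hcon.le⟩)

lemma inverse_exists {ψ y : ℝ → ℝ} {m : ℝ} (hm : 0 < m) (hψ : ∀ x, HasDerivAt ψ (y x) x)
    (hy : ∀ x, m ≤ y x) (run : ∀ x, ψ (x + 2 * π) = ψ x + 2 * π) (zero : ψ 0 = 0) :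
    ∃ θ : ℝ → ℝ, (∀ x, ψ (θ x) = x) ∧ (∀ t, θ (ψ t) = t) ∧
      (∀ x, HasDerivAt θ (y (θ x))⁻¹ x) ∧ (∀ x, θ (x + 2 * π) = θ x + 2 * π) ∧ θ 0 = 0 := by
  have hmono : StrictMono ψ := by
    apply strictMono_of_deriv_pos
    intro x
    rw [(hψ x).deriv]
    linarith [hy x]
  have hsurj : Function.Surjective ψ := by
    apply (cont_of hψ).surjective
    · apply Filter.tendsto_atTop_mono' _ (f₁ := fun x => m * x)
      · filter_upwards [Filter.eventually_ge_atTop 0] with x hx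
        have := mvt_ge hψ hx (C := m) (fun t _ _ => hy t)
        rw [zero] at this
        linarith
      · exact Filter.tendsto_id.const_mul_atTop hm
    · refine Filter.tendsto_atBot_mono' _ (?_ : ψ ≤ᶠ[_] fun x => m * x) ?_
      · filter_upwards [Filter.eventually_le_atBot 0] with x hx
        have := mvt_ge hψ hx (C := m) (fun t _ _ => hy t)
        rw [zero] at this
        linarith
      · exact Filter.tendsto_id.const_mul_atBot hm
  set o := hmono.orderIsoOfSurjective ψ hsurj with ho
  have h1 : ∀ x, ψ (o.symm x) = x := fun x => o.apply_symm_apply x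
  have h2 : ∀ t, o.symm (ψ t) = t := fun t => o.symm_apply_apply t
  refine ⟨o.symm, h1, h2, ?_, ?_, ?_⟩
  · intro x
    exact HasDerivAt.of_local_left_inverse o.symm.continuous.continuousAt (hψ _)
      (by linarith [hy (o.symm x)]) (Filter.Eventually.of_forall h1)
  · intro x
    apply hmono.injective
    rw [h1, run, h1]
  · have := h2 0
    rwa [zero] at this

lemma inv_diff {p q v r : ℝ} (hv : 0 < v) (hp : v ≤ p) (hq : v ≤ q) (h : p - q ≤ r)
    (hr : 0 ≤ r) : -(r / v ^ 2) ≤ p⁻¹ - q⁻¹ := by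
  have hp0 : 0 < p := by linarith
  have hq0 : 0 < q := by linarith
  have h1 : p⁻¹ - q⁻¹ = -((p - q) / (p * q)) := by field_simp; ring
  rw [h1, neg_le_neg_iff]
  have h2 : v ^ 2 ≤ p * q := by rw [sq]; gcongr
  calc (p - q) / (p * q) ≤ r / (p * q) := by gcongr
    _ ≤ r / v ^ 2 := by gcongr

lemma inv_diff_abs {p q v r : ℝ} (hv : 0 < v) (hp : v ≤ p) (hq : v ≤ q) (h : |p - q| ≤ r) :
    |p⁻¹ - q⁻¹| ≤ r / v ^ 2 := by
  have hr : 0 ≤ r := (abs_nonneg _).trans h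
  have h1 := inv_diff hv hp hq ((le_abs_self _).trans h) hr
  have h2 := inv_diff hv hq hp ((le_abs_self _).trans (by rwa [abs_sub_comm])) hr
  rw [abs_le]; constructor <;> linarith

lemma phase_max {p q p' q' v₀ v₁ r : ℝ} (hv₀ : 0 < v₀) (hp1 : p ≤ v₁) (hq1 : q ≤ v₁)
    (hp : v₀ ≤ p) (hq : v₀ ≤ q) (hp' : v₀ ≤ p') (hq' : v₀ ≤ q') (hr : 0 ≤ r) (h : p - q ≤ r)
    (hD : (p' ^ 2 - q' ^ 2) / 2 ≤ (p ^ 2 - q ^ 2) / 2) : p' - q' ≤ v₁ / v₀ * r := by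
  have h1 : (p ^ 2 - q ^ 2) / 2 ≤ r * v₁ := by
    have : (p - q) * (p + q) ≤ r * (p + q) := by
      apply mul_le_mul_of_nonneg_right h; linarith
    have : r * (p + q) ≤ r * (2 * v₁) := by gcongr; linarith
    nlinarith
  rw [div_mul_eq_mul_div, le_div_iff₀ hv₀]
  rcases le_total (p' - q') 0 with h2 | h2
  · have : 0 ≤ v₁ * r := mul_nonneg (by linarith) hr
    nlinarith
  · nlinarith

set_option maxHeartbeats 1000000 in
/-- Comparison in the phase plane. -/
lemma phase (β κ ω₀ ω₁ m M : ℝ) (hκ : 0 ≤ κ) (hω₀ : 0 < ω₀) (hω₁ : ω₀ ≤ ω₁)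
    (hm : 0 < m) (hM : 0 < M) :
    ∃ C > 0, ∀ (N : ℕ) (I L R γ : ℝ) (s₁ s₂ : RS N β I L R γ κ), 0 < N →
      ω₀ ≤ s₁.ω → s₁.ω ≤ ω₁ → ω₀ ≤ s₂.ω → s₂.ω ≤ ω₁ →
      (∀ x, m ≤ s₁.y x) → (∀ x, m ≤ s₂.y x) → (∀ x, |s₁.y x| ≤ M ∧ |s₁.z x| ≤ M) →
      (∀ x, |s₂.y x| ≤ M ∧ |s₂.z x| ≤ M) → s₂.ω ≤ s₁.ω →
      ∃ G ≥ 0, (∃ t₁ t₂, G = |s₁.b t₁ - s₂.b t₂| ∧ |t₁ - t₂| ≤ C * G) ∧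
        |s₁.ω - s₂.ω| ≤ C * G ∧ (∀ x, |s₁.ψ x - s₂.ψ x| ≤ C * G) ∧
        (∀ x, |s₁.y x - s₂.y x| ≤ C * G) := by
  have hω₁0 : 0 < ω₁ := by linarith
  set v₀ := ω₀ * m with hv₀
  set v₁ := ω₁ * M with hv₁
  have hv₀0 : 0 < v₀ := by positivity
  have hv₁0 : 0 < v₁ := by positivity
  set C₁ := v₁ / v₀ with hC₁
  have hC₁0 : 0 < C₁ := by positivity
  set C₂ := ω₁ ^ 2 * (C₁ / v₀ ^ 2) with hC₂
  have hC₂0 : 0 < C₂ := by positivity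
  set C₃ := C₁ * (κ * C₂ + 1) with hC₃
  have hC₃0 : 0 < C₃ := by positivity
  set C₄ := (C₃ + M * C₂) / ω₀ with hC₄
  have hC₄0 : 0 < C₄ := by positivity
  set C₅ := C₄ / m ^ 2 * (2 * π) with hC₅
  have hC₅0 : 0 < C₅ := by positivity
  refine ⟨C₂ + C₄ + C₅ + M * C₅, by positivity, ?_⟩
  intro N I L R γ s₁ s₂ hN w10 w11 w20 w21 y1 y2 M1 M2 hle
  obtain ⟨θ₁, p1, q1, d1, r1, z1⟩ := inverse_exists hm s₁.hψ y1 s₁.run s₁.zero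
  obtain ⟨θ₂, p2, q2, d2, r2, z2⟩ := inverse_exists hm s₂.hψ y2 s₂.run s₂.zero
  have pi0 := pi_pos
  -- the difference of the forcing terms
  have pb1 := RS.per_two_pi hN s₁.pb
  have pb2 := RS.per_two_pi hN s₂.pb
  obtain ⟨xg, hxg⟩ := per_abs (f := fun x => s₁.b (θ₁ x) - s₂.b (θ₂ x)) (c := 2 * π)
    (((cont_of s₁.hb).comp (cont_of d1)).sub ((cont_of s₂.hb).comp (cont_of d2)))
    (fun x => by simp only [r1, r2, pb1 _, pb2 _]) (by positivity)
  set G := |s₁.b (θ₁ xg) - s₂.b (θ₂ xg)| with hG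
  have hG0 : 0 ≤ G := abs_nonneg _
  set V₁ : ℝ → ℝ := fun x => s₁.ω * s₁.y (θ₁ x) with hV₁
  set V₂ : ℝ → ℝ := fun x => s₂.ω * s₂.y (θ₂ x) with hV₂
  have V1lo : ∀ x, v₀ ≤ V₁ x := fun x => by
    have := y1 (θ₁ x)
    have h2 := s₁.ω_pos.le
    simp only [hV₁, hv₀]; gcongr
  have V2lo : ∀ x, v₀ ≤ V₂ x := fun x => by
    have := y2 (θ₂ x)
    have h2 := s₂.ω_pos.le
    simp only [hV₂, hv₀]; gcongr
  have V1hi : ∀ x, V₁ x ≤ v₁ := fun x => by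
    have h1 := (abs_le.1 (M1 (θ₁ x)).1).2
    have h2 := s₁.ω_pos
    have h3 : 0 ≤ s₁.y (θ₁ x) := by linarith [y1 (θ₁ x)]
    simp only [hV₁, hv₁]; gcongr
  have V2hi : ∀ x, V₂ x ≤ v₁ := fun x => by
    have h1 := (abs_le.1 (M2 (θ₂ x)).1).2
    have h2 := s₂.ω_pos
    have h3 : 0 ≤ s₂.y (θ₂ x) := by linarith [y2 (θ₂ x)]
    simp only [hV₂, hv₁]; gcongr
  set D : ℝ → ℝ := fun x => (V₁ x ^ 2 - V₂ x ^ 2) / 2 with hD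
  have dV1 : ∀ x, HasDerivAt V₁ (s₁.ω * (s₁.z (θ₁ x) * (s₁.y (θ₁ x))⁻¹)) x := fun x =>
    ((s₁.hy (θ₁ x)).comp x (d1 x)).const_mul _
  have dV2 : ∀ x, HasDerivAt V₂ (s₂.ω * (s₂.z (θ₂ x) * (s₂.y (θ₂ x))⁻¹)) x := fun x =>
    ((s₂.hy (θ₂ x)).comp x (d2 x)).const_mul _
  have dD : ∀ x, HasDerivAt D (s₁.ω ^ 2 * s₁.z (θ₁ x) - s₂.ω ^ 2 * s₂.z (θ₂ x)) x := by
    intro x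
    have h1 := (((dV1 x).fun_pow 2).sub ((dV2 x).fun_pow 2)).div_const 2
    refine h1.congr_deriv ?_
    have e1 : s₁.y (θ₁ x) ≠ 0 := by linarith [y1 (θ₁ x)]
    have e2 : s₂.y (θ₂ x) ≠ 0 := by linarith [y2 (θ₂ x)]
    simp only [hV₁, hV₂]
    push_cast
    field_simp
  have perD : Function.Periodic D (2 * π) := by
    intro x
    simp only [hD, hV₁, hV₂, r1, r2, s₁.yper _, s₂.yper _]
  have eqD : ∀ x, β * (s₁.ω ^ 2 * s₁.z (θ₁ x) - s₂.ω ^ 2 * s₂.z (θ₂ x)) + (V₁ x - V₂ x) +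
      κ * (s₁.ω - s₂.ω) + (s₁.b (θ₁ x) - s₂.b (θ₂ x)) = 0 := by
    intro x
    have e1 := s₁.eq1 (θ₁ x)
    have e2 := s₂.eq1 (θ₂ x)
    rw [p1] at e1
    rw [p2] at e2
    simp only [hV₁, hV₂]
    linear_combination e1 - e2
  have hκω : 0 ≤ κ * (s₁.ω - s₂.ω) := mul_nonneg hκ (by linarith)
  -- upper bound
  have up : ∀ x, V₁ x - V₂ x ≤ C₁ * G := by
    obtain ⟨x0, h0⟩ := per_max (cont_of dD) perD (by positivity)
    have hz : s₁.ω ^ 2 * s₁.z (θ₁ x0) - s₂.ω ^ 2 * s₂.z (θ₂ x0) = 0 := by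
      have : IsLocalMax D x0 := Filter.Eventually.of_forall h0
      exact this.hasDerivAt_eq_zero (dD x0)
    have h1 := eqD x0
    rw [hz] at h1
    have h2 := (abs_le.1 (hxg x0)).1
    intro x
    exact phase_max hv₀0 (V1hi x0) (V2hi x0) (V1lo x0) (V2lo x0) (V1lo x) (V2lo x) hG0
      (by linarith) (h0 x)
  -- the frequencies
  have hfreq : s₁.ω - s₂.ω ≤ C₂ * G := by
    have dφ : ∀ x, HasDerivAt (fun x => θ₁ x / s₁.ω - θ₂ x / s₂.ω)
        ((V₁ x)⁻¹ - (V₂ x)⁻¹) x := by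
      intro x
      refine (((d1 x).div_const s₁.ω).sub ((d2 x).div_const s₂.ω)).congr_deriv ?_
      simp only [hV₁, hV₂, mul_inv, div_eq_mul_inv]
      ring
    have h1 := mvt_ge dφ (a := 0) (b := 2 * π) (by positivity)
      (fun x _ _ => inv_diff hv₀0 (V1lo x) (V2lo x) (up x) (by positivity))
    have h2 := r1 0
    have h3 := r2 0
    simp only [zero_add, z1] at h2
    simp only [zero_add, z2] at h3
    simp only [h2, h3, z1, z2] at h1
    have h4 : -(C₁ * G / v₀ ^ 2) ≤ 1 / s₁.ω - 1 / s₂.ω := by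
      have h5 : 2 * π / s₁.ω - 2 * π / s₂.ω - (0 / s₁.ω - 0 / s₂.ω) =
        (1 / s₁.ω - 1 / s₂.ω) * (2 * π) := by ring
      rw [h5, sub_zero] at h1
      exact le_of_mul_le_mul_right h1 (by positivity)
    have o1 := s₁.ω_pos
    have o2 := s₂.ω_pos
    have h6 : s₁.ω - s₂.ω = s₁.ω * s₂.ω * -(1 / s₁.ω - 1 / s₂.ω) := by
      field_simp; ring
    rw [h6]
    have h7 : C₂ * G = ω₁ * ω₁ * (C₁ * G / v₀ ^ 2) := by rw [hC₂]; ring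
    rw [h7]
    have h8 : 0 ≤ C₁ * G / v₀ ^ 2 := by positivity
    calc s₁.ω * s₂.ω * -(1 / s₁.ω - 1 / s₂.ω) ≤ s₁.ω * s₂.ω * (C₁ * G / v₀ ^ 2) := by
          gcongr; linarith
      _ ≤ ω₁ * ω₁ * (C₁ * G / v₀ ^ 2) := by gcongr
  -- lower bound
  have lo : ∀ x, V₂ x - V₁ x ≤ C₃ * G := by
    obtain ⟨x0, h0⟩ := per_min (cont_of dD) perD (by positivity)
    have hz : s₁.ω ^ 2 * s₁.z (θ₁ x0) - s₂.ω ^ 2 * s₂.z (θ₂ x0) = 0 := by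
      have : IsLocalMin D x0 := Filter.Eventually.of_forall h0
      exact this.hasDerivAt_eq_zero (dD x0)
    have h1 := eqD x0
    rw [hz] at h1
    have h2 := (abs_le.1 (hxg x0)).2
    have h3 : κ * (s₁.ω - s₂.ω) ≤ κ * (C₂ * G) := by gcongr
    intro x
    have := phase_max hv₀0 (V2hi x0) (V1hi x0) (V2lo x0) (V1lo x0) (V2lo x) (V1lo x)
      (r := (κ * C₂ + 1) * G) (by positivity)
      (by linarith) (by have := h0 x; simp only [hD] at this; linarith)
    rw [hC₃]; linarith
  have hC13 : C₁ * G ≤ C₃ * G := by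
    rw [hC₃]
    have : 0 ≤ C₁ * (κ * C₂) * G := by positivity
    linarith
  have hV : ∀ x, |V₁ x - V₂ x| ≤ C₃ * G := fun x => by
    rw [abs_le]; constructor <;> linarith [up x, lo x]
  have hw : ∀ x, |s₁.y (θ₁ x) - s₂.y (θ₂ x)| ≤ C₄ * G := by
    intro x
    have h1 : s₁.ω * (s₁.y (θ₁ x) - s₂.y (θ₂ x)) =
      (V₁ x - V₂ x) - (s₁.ω - s₂.ω) * s₂.y (θ₂ x) := by
      simp only [hV₁, hV₂]; ring
    have h2 : |(s₁.ω - s₂.ω) * s₂.y (θ₂ x)| ≤ C₂ * G * M := by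
      rw [abs_mul, abs_of_nonneg (by linarith : 0 ≤ s₁.ω - s₂.ω)]
      have := (M2 (θ₂ x)).1
      gcongr
    have h3 : |s₁.ω * (s₁.y (θ₁ x) - s₂.y (θ₂ x))| ≤ C₃ * G + C₂ * G * M := by
      rw [h1]
      exact (abs_sub _ _).trans (add_le_add (hV x) h2)
    rw [abs_mul, abs_of_pos s₁.ω_pos] at h3
    have h4 : C₄ * G = (C₃ * G + C₂ * G * M) / ω₀ := by rw [hC₄]; ring
    rw [h4, le_div_iff₀ hω₀]
    refine le_trans ?_ h3
    rw [mul_comm]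
    gcongr
  have hθ : ∀ x, |θ₁ x - θ₂ x| ≤ C₅ * G := by
    have dθ : ∀ x, HasDerivAt (fun x => θ₁ x - θ₂ x)
      ((s₁.y (θ₁ x))⁻¹ - (s₂.y (θ₂ x))⁻¹) x := fun x => (d1 x).sub (d2 x)
    intro x
    have := zm_bound dθ (h := 2 * π) (by positivity) (fun x => by simp only [r1, r2]; ring)
      ⟨0, by rw [z1, z2, sub_zero]⟩
      (fun x => inv_diff_abs hm (y1 (θ₁ x)) (y2 (θ₂ x)) (hw x)) x
    refine this.trans (le_of_eq ?_)
    rw [hC₅]; ring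
  have n2 : 0 ≤ C₂ * G := by positivity
  have n4 : 0 ≤ C₄ * G := by positivity
  have n5 : 0 ≤ C₅ * G := by positivity
  have n6 : 0 ≤ M * C₅ * G := by positivity
  have n5' : ∀ x, M * |θ₁ x - θ₂ x| ≤ M * C₅ * G := fun x => by
    rw [mul_assoc]; exact mul_le_mul_of_nonneg_left (hθ x) hM.le
  refine ⟨G, hG0, ⟨θ₁ xg, θ₂ xg, rfl, ?_⟩, ?_, ?_, ?_⟩
  · have := hθ xg
    linarith
  · rw [abs_of_nonneg (by linarith)]
    linarith
  · intro t
    have h1 := lip_bound s₂.hψ (fun x => (M2 x).1) (θ₂ (s₁.ψ t)) (θ₁ (s₁.ψ t))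
    rw [p2, q1] at h1
    have h2 := n5' (s₁.ψ t)
    rw [abs_sub_comm, q1] at h2
    linarith
  · intro t
    have h1 := lip_bound s₂.hy (fun x => (M2 x).2) (θ₂ (s₁.ψ t)) (θ₁ (s₁.ψ t))
    have h2 := n5' (s₁.ψ t)
    rw [abs_sub_comm] at h2
    have h3 := hw (s₁.ψ t)
    rw [q1] at h1 h2 h3
    have h4 : s₁.y t - s₂.y t = (s₁.y t - s₂.y (θ₂ (s₁.ψ t))) + (s₂.y (θ₂ (s₁.ψ t)) - s₂.y t) := by
      ring
    rw [h4]
    refine (abs_add_le _ _).trans ?_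
    linarith

lemma cos_mul_diff {p q u v M d : ℝ} (hM : 0 ≤ M) (hu : |u| ≤ M) (hp : |p - q| ≤ d)
    (hv : |u - v| ≤ d) : |cos p * u - cos q * v| ≤ (M + 1) * d := by
  have hd : 0 ≤ d := (abs_nonneg _).trans hp
  have h1 : |cos p - cos q| ≤ 1 * |p - q| :=
    lip_bound (f := cos) (f' := fun x => -sin x) (fun x => hasDerivAt_cos x)
      (fun x => by rw [abs_neg]; exact abs_sin_le_one x) p q
  have h2 : cos p * u - cos q * v = (cos p - cos q) * u + cos q * (u - v) := by ring
  rw [h2]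
  calc _ ≤ |(cos p - cos q) * u| + |cos q * (u - v)| := abs_add_le _ _
    _ = |cos p - cos q| * |u| + |cos q| * |u - v| := by rw [abs_mul, abs_mul]
    _ ≤ d * M + 1 * d := by
        gcongr
        · linarith
        · exact abs_cos_le_one q
    _ = _ := by ring

lemma rs_unique (β I L R γ κ : ℝ) (hβ : 0 < β) (hI : 1 < I) (hκ : 0 ≤ κ)
    (hL : 0 ≤ L) (hR : 0 ≤ R) (hγ : 0 ≤ γ) (hRγ : γ ≠ 0 ∨ R ≠ 0) :
    ∃ h₀ > 0, ∀ N : ℕ, 0 < N → 2 * π / (N:ℝ) ≤ h₀ → ∀ s₁ s₂ : RS N β I L R γ κ,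
      s₁.ω = s₂.ω ∧ s₁.ψ = s₂.ψ ∧ s₁.b = s₂.b := by
  obtain ⟨ω₀, hω₀, ω₁, hω₁, hω⟩ := omega_range β I L R γ κ hI hκ
  obtain ⟨M, hM, h₁, hh₁, HM⟩ := apriori β I L R γ κ hβ hI hκ hL hR hγ hRγ
  obtain ⟨C, hC, h₂, hh₂, HC⟩ := small_bounds β I L R γ κ hβ hI hκ hL hR hγ hRγ
  obtain ⟨m, hm, h₃, hh₃, Hm⟩ := positivity_bound β I L R γ κ hβ hI hκ hL hR hγ hRγ
  obtain ⟨D, hD, h₄, hh₄, HD⟩ := lin_est β L R γ ω₀ hβ hL hR hγ hRγ hω₀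
  have hM0 : 0 < M := by linarith
  obtain ⟨P, hP, HP⟩ := phase β κ ω₀ ω₁ m M hκ hω₀ hω₁ hm hM0
  set K := (M + 1) * P + (β + 1) * P * C with hK
  have hK0 : 0 < K := by positivity
  set Z := D * K + C * P with hZ
  have hZ0 : 0 < Z := by positivity
  refine ⟨min (min h₁ h₂) (min (min h₃ h₄) (1 / (2 * Z))), by positivity, ?_⟩
  intro N hN hh s₁ s₂
  wlog hle : s₂.ω ≤ s₁.ω generalizing s₁ s₂
  · obtain ⟨r1, r2, r3⟩ := this s₂ s₁ (le_of_not_ge hle)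
    exact ⟨r1.symm, r2.symm, r3.symm⟩
  have q1 : 2 * π / (N:ℝ) ≤ h₁ := hh.trans ((min_le_left _ _).trans (min_le_left _ _))
  have q2 : 2 * π / (N:ℝ) ≤ h₂ := hh.trans ((min_le_left _ _).trans (min_le_right _ _))
  have q3 : 2 * π / (N:ℝ) ≤ h₃ :=
    hh.trans ((min_le_right _ _).trans ((min_le_left _ _).trans (min_le_left _ _)))
  have q4 : 2 * π / (N:ℝ) ≤ h₄ :=
    hh.trans ((min_le_right _ _).trans ((min_le_left _ _).trans (min_le_right _ _)))
  have q5 : 2 * π / (N:ℝ) ≤ 1 / (2 * Z) :=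
    hh.trans ((min_le_right _ _).trans (min_le_right _ _))
  have hpos := h_pos hN
  obtain ⟨G, hG0, ⟨t₁, t₂, hG, ht⟩, hom, hψ, hy⟩ := HP N I L R γ s₁ s₂ hN (hω N hN s₁).1
    (hω N hN s₁).2 (hω N hN s₂).1 (hω N hN s₂).2 (Hm N hN q3 s₁) (Hm N hN q3 s₂)
    (HM N hN q1 s₁) (HM N hN q1 s₂) hle
  have c1 := HC N hN q2 s₁
  have c2 := HC N hN q2 s₂
  have m1 := HM N hN q1 s₁
  set h := 2 * π / (N:ℝ) with hh_def
  have hS1 : ∀ x, |s₁.S1 x - s₂.S1 x| ≤ (M + 1) * (P * G) := by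
    intro x
    simp only [RS.S1]
    rw [← avgN_sub]
    exact avgN_abs hN (fun t => cos_mul_diff hM0.le (m1 t).1 (hψ t) (hy t)) x
  have hS : ∀ x, |s₁.S x - s₂.S x| ≤ h * ((M + 1) * (P * G)) := by
    intro x
    exact zm_bound (f := fun x => s₁.S x - s₂.S x) (f' := fun x => s₁.S1 x - s₂.S1 x)
      (fun x => (s₁.hS x).sub (s₂.hS x)) hpos
      (fun x => by simp only [s₁.pS hN x, s₂.pS hN x]; rw [s₁.pS hN x, s₂.pS hN x])
      ((s₁.zS hN).sub (s₂.zS hN)).exists_zero hS1 x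
  have small : ∀ u, |u| ≤ C * h → |(s₁.ω - s₂.ω) * u| ≤ P * G * (C * h) := by
    intro u hu
    rw [abs_mul]
    gcongr
  have hb : ∀ x, |s₁.b x - s₂.b x| ≤ D * (K * h * G) := by
    intro x
    refine (HD s₁.ω h (K * h * G) (fun x => s₁.a x - s₂.a x) (fun x => s₁.a1 x - s₂.a1 x)
      (fun x => s₁.b x - s₂.b x) (fun x => s₁.b1 x - s₂.b1 x)
      (fun x => s₁.e x - s₂.e x) (fun x => s₁.e1 x - s₂.e1 x)
      (hω N hN s₁).1 hpos q4 (by positivity)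
      (fun x => (s₁.ha x).sub (s₂.ha x)) (fun x => (s₁.hb x).sub (s₂.hb x))
      (fun x => (s₁.he x).sub (s₂.he x))
      (s₁.pa.sub s₂.pa) (s₁.pb.sub s₂.pb) (s₁.pe.sub s₂.pe)
      (s₁.za.sub s₂.za) (s₁.zb.sub s₂.zb) (s₁.ze.sub s₂.ze) ?_ ?_ ?_ x).1
    · intro x
      have e1 := s₁.eqa x
      have e2 := s₂.eqa x
      have : β * s₁.ω * (s₁.a1 x - s₂.a1 x) + (s₁.a x - s₂.a x) + (s₁.b x - s₂.b x) =
          -(s₁.S x - s₂.S x) - β * ((s₁.ω - s₂.ω) * s₂.a1 x) := by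
        simp only [RS.S]; linarith
      rw [this]
      have k1 := abs_le.1 (hS x)
      have k2 := small _ (c2 x).2.1
      have k3 : |β * ((s₁.ω - s₂.ω) * s₂.a1 x)| ≤ β * (P * G * (C * h)) := by
        rw [abs_mul β, abs_of_pos hβ]; gcongr
      have k4 := abs_le.1 k3
      have k5 : 0 ≤ P * G * (C * h) := by positivity
      have k6 : K * h * G = h * ((M + 1) * (P * G)) + β * (P * G * (C * h)) +
        P * G * (C * h) := by rw [hK]; ring
      rw [abs_le]
      constructor <;> linarith [k1.1, k1.2, k4.1, k4.2]
    · intro x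
      have e1 := s₁.eqb x
      have e2 := s₂.eqb x
      have : L * s₁.ω * (s₁.b1 x - s₂.b1 x) + R * (s₁.b x - s₂.b x) + (s₁.e x - s₂.e x)
          - (s₁.a x - s₂.a x) = -(L * ((s₁.ω - s₂.ω) * s₂.b1 x)) := by linarith
      rw [this, abs_neg, abs_mul, abs_of_nonneg hL]
      have k2 := small _ (c2 x).2.2.2
      have k5 : 0 ≤ h * ((M + 1) * (P * G)) + β * (P * G * (C * h)) := by positivity
      have k6 : K * h * G = h * ((M + 1) * (P * G)) + β * (P * G * (C * h)) +
        P * G * (C * h) := by rw [hK]; ring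
      gcongr
      linarith
    · intro x
      have e1 := s₁.eqe x
      have e2 := s₂.eqe x
      have : s₁.ω * (s₁.e1 x - s₂.e1 x) - γ * (s₁.b x - s₂.b x) =
          -((s₁.ω - s₂.ω) * s₂.e1 x) := by linarith
      rw [this, abs_neg]
      have k2 := small _ (c2 x).2.2.1
      have k5 : 0 ≤ h * ((M + 1) * (P * G)) + β * (P * G * (C * h)) := by positivity
      have k6 : K * h * G = h * ((M + 1) * (P * G)) + β * (P * G * (C * h)) +
        P * G * (C * h) := by rw [hK]; ring
      linarith
  have hG' : G = 0 := by
    have g1 := lip_bound s₂.hb (fun x => (c2 x).2.2.2) t₁ t₂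
    have g2 : C * h * |t₁ - t₂| ≤ C * h * (P * G) := by gcongr
    have g3 : G ≤ |s₁.b t₁ - s₂.b t₁| + |s₂.b t₁ - s₂.b t₂| := by
      rw [hG]; exact abs_sub_le _ _ _
    have g4 : G ≤ Z * h * G := by
      have : Z * h * G = D * (K * h * G) + C * h * (P * G) := by rw [hZ]; ring
      linarith [hb t₁]
    have g5 : Z * h ≤ 1 / 2 := by
      calc Z * h ≤ Z * (1 / (2 * Z)) := by gcongr
        _ = 1 / 2 := by field_simp
    have g6 : Z * h * G ≤ 1 / 2 * G := by gcongr
    linarith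
  rw [hG'] at hom hψ hb
  simp only [mul_zero] at hom hψ hb
  refine ⟨?_, funext fun x => ?_, funext fun x => ?_⟩
  · exact sub_eq_zero.1 (abs_nonpos_iff.1 hom)
  · exact sub_eq_zero.1 (abs_nonpos_iff.1 (hψ x))
  · exact sub_eq_zero.1 (abs_nonpos_iff.1 (hb x))

lemma deriv_per {f f1 : ℝ → ℝ} {c : ℝ} (hf : ∀ x, HasDerivAt f (f1 x) x)
    (hp : Function.Periodic f c) : Function.Periodic f1 c := by
  intro x
  have h1 : HasDerivAt (fun t => f (t + c)) (f1 (x + c)) x := (hf (x + c)).comp_add_const x _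
  have h2 : (fun t => f (t + c)) = f := funext hp
  rw [h2] at h1
  exact h1.unique (hf x)

lemma extract {N : ℕ} (hN : 2 ≤ N) {β I L R γ κ T : ℝ} {ψ Q : ℝ → ℝ}
    (hγκ : γ * κ = 0) (hRκ : γ = 0 → R * κ = 1) (hRγ : γ ≠ 0 ∨ R ≠ 0)
    (H : IsNormalizedDRW N β I L R γ ψ Q T) :
    ∃ s : RS N β I L R γ κ, s.ω = 2 * π / T ∧ (∀ t, ψ t = s.ψ (s.ω * t)) ∧
      (∀ t, deriv Q t = s.b (s.ω * t) + κ * s.ω) := by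
  obtain ⟨hT, cψ, cQ, run, zero, sys, load⟩ := H
  have hN0 : 0 < N := by omega
  have hN' : (N:ℝ) ≠ 0 := by positivity
  have dψ : ∀ t, HasDerivAt ψ (deriv ψ t) t := fun t =>
    (cψ.differentiable (by norm_num) t).hasDerivAt
  have dQ : ∀ t, HasDerivAt Q (deriv Q t) t := fun t =>
    (cQ.differentiable (by norm_num) t).hasDerivAt
  have ddψ : ∀ t, HasDerivAt (deriv ψ) (deriv (deriv ψ) t) t := fun t => by
    have : ContDiff ℝ 1 (deriv ψ) := by
      have h := (contDiff_succ_iff_deriv (n := 1) (f := ψ) (𝕜 := ℝ)).1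
        (by exact_mod_cast cψ)
      exact h.2.2
    exact (this.differentiable (by norm_num) t).hasDerivAt
  have ddQ : ∀ t, HasDerivAt (deriv Q) (deriv (deriv Q) t) t := fun t => by
    have : ContDiff ℝ 1 (deriv Q) := by
      have h := (contDiff_succ_iff_deriv (n := 1) (f := Q) (𝕜 := ℝ)).1
        (by exact_mod_cast cQ)
      exact h.2.2
    exact (this.differentiable (by norm_num) t).hasDerivAt
  -- simplify the system
  have D1 : ∀ c t, deriv (fun u => ψ (u - c)) t = deriv ψ (t - c) := fun c t =>
    ((dψ (t - c)).comp_sub_const t c).deriv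
  have D2 : ∀ c t, deriv (deriv (fun u => ψ (u - c))) t = deriv (deriv ψ) (t - c) := by
    intro c t
    have : deriv (fun u => ψ (u - c)) = fun t => deriv ψ (t - c) := funext (D1 c)
    rw [this]
    exact ((ddψ (t - c)).comp_sub_const t c).deriv
  simp only [D1, D2] at sys load
  set ω := 2 * π / T with hω
  have pi0 := pi_pos
  have hω0 : 0 < ω := by positivity
  have hω' : ω ≠ 0 := hω0.ne'
  have shift : ∀ (x : ℝ) (j : ℕ), (x - (j:ℝ) * (2 * π / N)) / ω = x / ω - (j:ℝ) * T / N := by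
    intro x j
    rw [hω]
    field_simp
  have hT2 : 2 * π / ω = T := by rw [hω]; field_simp
  have hTN : (2 * π / N) / ω = T / N := by rw [hω]; field_simp
  -- periodicity of the load current
  have pQ : ∀ t, deriv Q (t + T / N) = deriv Q t := by
    intro t
    have e0 := sys ⟨0, by omega⟩ t
    have e1 := sys ⟨1, by omega⟩ (t + T / N)
    simp only [Nat.cast_zero, Nat.cast_one, zero_mul, zero_div, sub_zero, one_mul,
      add_sub_cancel_right] at e0 e1
    linarith
  have sc : ∀ {f f1 : ℝ → ℝ}, (∀ x, HasDerivAt f (f1 x) x) →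
      ∀ x, HasDerivAt (fun x => f (x / ω)) (f1 (x / ω) / ω) x := by
    intro f f1 hf x
    have h1 : HasDerivAt (fun x : ℝ => x / ω) (1 / ω) x := (hasDerivAt_id x).div_const ω
    exact ((hf (x / ω)).comp x h1).congr_deriv (by ring)
  set Ψ : ℝ → ℝ := fun x => ψ (x / ω) with hΨ
  set y : ℝ → ℝ := fun x => deriv ψ (x / ω) / ω with hy_def
  set z : ℝ → ℝ := fun x => deriv (deriv ψ) (x / ω) / ω / ω with hz_def
  have hΨy : ∀ x, HasDerivAt Ψ (y x) x := sc dψ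
  have hyz : ∀ x, HasDerivAt y (z x) x := fun x => (sc ddψ x).div_const ω
  have Prun : ∀ x, Ψ (x + 2 * π) = Ψ x + 2 * π := by
    intro x
    simp only [hΨ, add_div, hT2]
    exact run _
  have yper : Function.Periodic y (2 * π) := by
    intro x
    have h1 : HasDerivAt (fun t => Ψ (t + 2 * π)) (y (x + 2 * π)) x :=
      (hΨy (x + 2 * π)).comp_add_const x _
    have h2 : HasDerivAt (fun t => Ψ (t + 2 * π)) (y x) x := by
      have := (hΨy x).add_const (2 * π)
      simpa only [Prun] using this
    exact h1.unique h2
  set a : ℝ → ℝ := fun x => ω * (avgN N y x - 1) with ha_def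
  set a1 : ℝ → ℝ := fun x => ω * avgN N z x with ha1_def
  set b : ℝ → ℝ := fun x => deriv Q (x / ω) - κ * ω with hb_def
  set b1 : ℝ → ℝ := fun x => deriv (deriv Q) (x / ω) / ω with hb1_def
  set e : ℝ → ℝ := fun x => γ * Q (x / ω) - (1 - R * κ) * ω with he_def
  set e1 : ℝ → ℝ := fun x => γ * (deriv Q (x / ω) / ω) with he1_def
  have ha : ∀ x, HasDerivAt a (a1 x) x := fun x =>
    ((avgN_deriv N hyz x).sub_const 1).const_mul ω
  have hb : ∀ x, HasDerivAt b (b1 x) x := fun x => (sc ddQ x).sub_const _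
  have he : ∀ x, HasDerivAt e (e1 x) x := fun x => ((sc dQ x).const_mul γ).sub_const _
  have pa : Function.Periodic a (2 * π / N) := fun x => by
    simp only [ha_def, avgN_periodic hN0 yper x]
  have pb : Function.Periodic b (2 * π / N) := fun x => by
    simp only [hb_def, add_div, hTN, pQ]
  have pb1 : Function.Periodic b1 (2 * π / N) := deriv_per hb pb
  have eqb : ∀ x, L * ω * b1 x + R * b x + e x - a x = 0 := by
    intro x
    have h1 := load (x / ω)
    have h2 : ω * avgN N y x =
        1 / (N:ℝ) * ∑ j : Fin N, deriv ψ (x / ω - ((j:ℕ):ℝ) * T / N) := by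
      simp only [avgN, hy_def, shift]
      rw [← Finset.sum_div, mul_left_comm, mul_div_cancel₀ _ hω']
    have h3 : ω * b1 x = deriv (deriv Q) (x / ω) := by
      simp only [hb1_def]; field_simp
    rw [← h2, ← h3] at h1
    simp only [hb_def, he_def, ha_def]
    linarith
  have eqe : ∀ x, ω * e1 x - γ * b x = 0 := by
    intro x
    simp only [he1_def, hb_def]
    have : ω * (γ * (deriv Q (x / ω) / ω)) = γ * deriv Q (x / ω) := by field_simp
    rw [this]
    linear_combination ω * hγκ
  have e_eq : ∀ x, e x = a x - R * b x - L * ω * b1 x := fun x => by linarith [eqb x]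
  have pe : Function.Periodic e (2 * π / N) := fun x => by
    rw [e_eq, e_eq, pa, pb, pb1]
  have za : ZM a := by
    refine ⟨fun x => ω * (avgN N Ψ x - x), fun x =>
      ((avgN_deriv N hΨy x).sub (hasDerivAt_id x)).const_mul ω, ?_⟩
    have : avgN N Ψ (2 * π) = avgN N Ψ 0 + 2 * π := by
      simp only [avgN]
      have : ∀ j : Fin N, Ψ (2 * π - ((j:ℕ):ℝ) * (2 * π / N)) =
          Ψ (0 - ((j:ℕ):ℝ) * (2 * π / N)) + 2 * π := by
        intro j
        rw [← Prun]
        congr 1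
        ring
      simp only [this, Finset.sum_add_distrib, Finset.sum_const, Finset.card_univ,
        Fintype.card_fin, nsmul_eq_mul]
      rw [mul_add, one_div, inv_mul_cancel_left₀ hN']
    beta_reduce
    rw [this]; ring
  have zper : ∀ {f f1 : ℝ → ℝ}, (∀ x, HasDerivAt f (f1 x) x) →
      Function.Periodic f (2 * π / N) → ZM f1 := by
    intro f f1 hf hp
    refine ⟨f, hf, ?_⟩
    have := RS.per_two_pi hN0 hp 0
    rwa [zero_add] at this
  have zb1 : ZM b1 := zper hb pb
  have zb : ZM b := by
    by_cases hg : γ = 0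
    · have hR : R ≠ 0 := hRγ.resolve_left (fun h => h hg)
      refine ((za.sub (zb1.cmul (L * ω))).cmul (1 / R)).congr (fun x => ?_)
      have h1 := eqb x
      have h2 : e x = 0 := by simp only [he_def, hg, hRκ hg]; ring
      field_simp
      linarith
    · refine ((zper he pe).cmul (ω / γ)).congr (fun x => ?_)
      have h1 := eqe x
      field_simp
      linarith
  have ze : ZM e := ((za.sub (zb.cmul R)).sub (zb1.cmul (L * ω))).congr e_eq
  have w1 : ∀ t, ω * (deriv ψ t / ω) = deriv ψ t := fun t => by field_simp
  have w2 : ∀ t, ω ^ 2 * (deriv (deriv ψ) t / ω / ω) = deriv (deriv ψ) t := fun t => by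
    field_simp
  have eq1 : ∀ x, β * ω ^ 2 * z x + ω * y x + sin (Ψ x) + κ * ω + b x = I := by
    intro x
    have e0 := sys ⟨0, by omega⟩ (x / ω)
    simp only [Nat.cast_zero, zero_mul, zero_div, sub_zero] at e0
    simp only [hz_def, hy_def, hΨ, hb_def]
    rw [mul_assoc, w2, w1]
    linarith
  have eqa : ∀ x, β * ω * a1 x + a x + b x +
      (avgN N (fun t => sin (Ψ t)) x - (I - (1 + κ) * ω)) = 0 := by
    intro x
    have h1 : ∀ j : Fin N, β * ω ^ 2 * z (x - ((j:ℕ):ℝ) * (2 * π / N)) +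
        ω * y (x - ((j:ℕ):ℝ) * (2 * π / N)) + sin (Ψ (x - ((j:ℕ):ℝ) * (2 * π / N))) +
        deriv Q (x / ω) = I := by
      intro j
      have e0 := sys j (x / ω)
      simp only [hz_def, hy_def, hΨ, shift]
      rw [mul_assoc, w2, w1]
      exact e0
    have h2 := Finset.sum_congr (rfl : (Finset.univ : Finset (Fin N)) = Finset.univ)
      (fun j _ => h1 j)
    simp only [Finset.sum_add_distrib, ← Finset.mul_sum, Finset.sum_const, Finset.card_univ,
      Fintype.card_fin, nsmul_eq_mul] at h2
    have h3 : β * ω ^ 2 * avgN N z x + ω * avgN N y x + avgN N (fun t => sin (Ψ t)) x +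
        deriv Q (x / ω) = I := by
      have hNN : 1 / (N:ℝ) * N = 1 := by field_simp
      simp only [avgN]
      linear_combination (1 / (N:ℝ)) * h2 - (deriv Q (x / ω) - I) * hNN
    simp only [ha1_def, ha_def, hb_def]
    linarith
  refine ⟨⟨ω, Ψ, y, z, a, a1, b, b1, e, e1, hω0, hΨy, hyz, eq1, Prun, ?_, ha, hb, he, pa, pb,
    pe, za, zb, ze, eqa, eqb, eqe⟩, rfl, ?_, ?_⟩
  · simp only [hΨ, zero_div, zero]
  · intro t
    simp only [hΨ]
    rw [mul_div_cancel_left₀ _ hω']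
  · intro t
    simp only [hb_def]
    rw [mul_div_cancel_left₀ _ hω']
    ring

/-- **Theorem 2 (iii) (Huang–Aronson).** For `I > 1`, `β > 0` and `γ ≠ 0` or `R ≠ 0`,
there is an `N₀` such that for every `N > N₀` the normalized discrete rotating wave
solution of the `N`-junction Josephson system with LRC load is unique: any two such
solutions have the same period, the same waveform and the same load current. -/
theorem drw_unique_for_large_N (β I L R γ : ℝ) (hI : 1 < I) (hβ : 0 < β)
    (hL : 0 ≤ L) (hR : 0 ≤ R) (hγ : 0 ≤ γ) (hRγ : γ ≠ 0 ∨ R ≠ 0) :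
    ∃ N₀ : ℕ, ∀ N : ℕ, N₀ < N →
      ∀ (ψ Q ψ' Q' : ℝ → ℝ) (T T' : ℝ),
        IsNormalizedDRW N β I L R γ ψ Q T →
        IsNormalizedDRW N β I L R γ ψ' Q' T' →
        T = T' ∧ ψ = ψ' ∧ deriv Q = deriv Q' := by
  obtain ⟨κ, hκ, hγκ, hRκ⟩ : ∃ κ : ℝ, 0 ≤ κ ∧ γ * κ = 0 ∧ (γ = 0 → R * κ = 1) := by
    by_cases hg : γ = 0
    · have hR' : R ≠ 0 := hRγ.resolve_left (fun h => h hg)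
      exact ⟨1 / R, by positivity, by simp [hg], fun _ => by field_simp⟩
    · exact ⟨0, le_rfl, mul_zero _, fun h => absurd h hg⟩
  obtain ⟨h₀, hh₀, H⟩ := rs_unique β I L R γ κ hβ hI hκ hL hR hγ hRγ
  refine ⟨max 2 ⌈2 * π / h₀⌉₊, ?_⟩
  intro N hN ψ Q ψ' Q' T T' H1 H2
  have hN2 : 2 ≤ N := ((le_max_left _ _).trans_lt hN).le
  have hNh : 2 * π / (N:ℝ) ≤ h₀ := by
    have h1 : ⌈2 * π / h₀⌉₊ ≤ N := ((le_max_right _ _).trans_lt hN).le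
    have h2 : 2 * π / h₀ ≤ N := Nat.ceil_le.1 h1
    have hN0 : (0:ℝ) < N := by
      have : 0 < N := by omega
      exact_mod_cast this
    rw [div_le_iff₀ hh₀] at h2
    rw [div_le_iff₀ hN0]
    linarith
  have hT := H1.1
  have hT' := H2.1
  obtain ⟨s₁, o1, p1, q1⟩ := extract hN2 hγκ hRκ hRγ H1
  obtain ⟨s₂, o2, p2, q2⟩ := extract hN2 hγκ hRκ hRγ H2
  obtain ⟨r1, r2, r3⟩ := H N (by omega) hNh s₁ s₂
  refine ⟨?_, ?_, ?_⟩
  · rw [o1, o2] at r1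
    have pi0 := pi_pos
    field_simp at r1
    exact r1.symm
  · funext t
    rw [p1, p2, r1, r2]
  · funext t
    rw [q1, q2, r1, r3]
end

section
/- (Theorem 5, resistive case, Huang) Let N ≥ 2, β > 0, R > 0, and consider the Josephson junction array with pure resistive load: β φ_k'' + φ_k' + sin(φ_k) + (1/(NR)) Σ_{j=1}^N φ_j' = I for k = 1, …, N. If I > 2/R + 1, then this system admits no semirotor solution: there is no solution in which some nonempty proper subset of the junctions follows a running function ψ₁ of period T while the remaining junctions follow a genuinely T-periodic function ψ₂. -/
open Real

/-- The family of junction waveforms of a semirotor: the junctions in `S` follow `ψ₁`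
and the remaining junctions follow `ψ₂`. -/
def semiFam (N : ℕ) (S : Finset (Fin N)) (ψ₁ ψ₂ : ℝ → ℝ) : Fin N → ℝ → ℝ :=
  fun j t => if j ∈ S then ψ₁ t else ψ₂ t

theorem deriv_shift_aux (f : ℝ → ℝ) (T c : ℝ) (h : ∀ t, f (t + T) = f t + c) (t : ℝ) :
    deriv f (t + T) = deriv f t := by
  have h1 : (fun t => f (t + T)) = fun t => f t + c := funext h
  rw [← deriv_comp_add_const, h1, deriv_add_const]

/-- **Theorem 5, resistive case (Huang).** For the Josephson junction array with pure
resistive load, `β φ_k'' + φ_k' + sin (φ_k) + (1/(NR)) ∑_j φ_j' = I`, if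
`I > 2/R + 1` then no semirotor solution exists: there is no solution in which the
junctions in some nonempty proper subset follow a running function `ψ₁` of period `T`
while the remaining junctions follow a `T`-periodic function `ψ₂`. -/
theorem huang_no_semirotor_resistive (N : ℕ) (hN : 2 ≤ N) (β R I : ℝ)
    (hβ : 0 < β) (hR : 0 < R) (hI : 2 / R + 1 < I) :
    ¬ ∃ (S : Finset (Fin N)) (ψ₁ ψ₂ : ℝ → ℝ) (T : ℝ),
        S.Nonempty ∧ S ≠ Finset.univ ∧ 0 < T ∧
        ContDiff ℝ 2 ψ₁ ∧ ContDiff ℝ 2 ψ₂ ∧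
        IsRunning ψ₁ T ∧ (∀ t : ℝ, ψ₂ (t + T) = ψ₂ t) ∧
        (∀ k : Fin N, ∀ t : ℝ,
          β * deriv (deriv (semiFam N S ψ₁ ψ₂ k)) t + deriv (semiFam N S ψ₁ ψ₂ k) t +
            Real.sin (semiFam N S ψ₁ ψ₂ k t) +
            (1 / ((N : ℝ) * R)) * ∑ j : Fin N, deriv (semiFam N S ψ₁ ψ₂ j) t = I) := by
  rintro ⟨S, ψ₁, ψ₂, T, ⟨k₁, hk₁⟩, hS, hT, h1, h2, hr, hp, he⟩
  obtain ⟨k₂, hk₂⟩ : ∃ k, k ∉ S := by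
    by_contra! h
    exact hS (Finset.eq_univ_iff_forall.2 h)
  have f1 : ∀ j, j ∈ S → semiFam N S ψ₁ ψ₂ j = ψ₁ := fun j hj => by
    funext t; simp [semiFam, hj]
  have f2 : ∀ j, j ∉ S → semiFam N S ψ₁ ψ₂ j = ψ₂ := fun j hj => by
    funext t; simp [semiFam, hj]
  have hsum : ∀ t, ∑ j : Fin N, deriv (semiFam N S ψ₁ ψ₂ j) t
      = (S.card : ℝ) * deriv ψ₁ t + (Sᶜ.card : ℝ) * deriv ψ₂ t := by
    intro t
    rw [← Finset.sum_add_sum_compl S]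
    rw [Finset.sum_congr rfl (g := fun _ => deriv ψ₁ t) (fun j hj => by rw [f1 j hj]),
      Finset.sum_congr (s₁ := Sᶜ) rfl (g := fun _ => deriv ψ₂ t)
        (fun j hj => by rw [f2 j (Finset.mem_compl.1 hj)])]
    simp
  have hNpos : (0 : ℝ) < N := by exact_mod_cast (by omega : 0 < N)
  have hcard : (S.card : ℝ) ≤ N := by
    have := Finset.card_le_univ S
    rw [Fintype.card_fin] at this
    exact_mod_cast this
  obtain ⟨a, ha⟩ : ∃ a, a = 1 / ((N : ℝ) * R) * (S.card : ℝ) := ⟨_, rfl⟩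
  obtain ⟨b, hb⟩ : ∃ b, b = 1 / ((N : ℝ) * R) * (Sᶜ.card : ℝ) := ⟨_, rfl⟩
  have haR : a ≤ 1 / R := by
    calc a ≤ 1 / ((N : ℝ) * R) * N := by rw [ha]; gcongr
      _ = 1 / R := by field_simp
  have ha0 : 0 ≤ a := by rw [ha]; positivity
  have e1 : ∀ t, β * deriv (deriv ψ₁) t + deriv ψ₁ t + Real.sin (ψ₁ t)
      + (a * deriv ψ₁ t + b * deriv ψ₂ t) = I := by
    intro t
    have := he k₁ t
    rw [hsum, f1 k₁ hk₁] at this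
    rw [ha, hb]; linarith
  have e2 : ∀ t, β * deriv (deriv ψ₂) t + deriv ψ₂ t + Real.sin (ψ₂ t)
      + (a * deriv ψ₁ t + b * deriv ψ₂ t) = I := by
    intro t
    have := he k₂ t
    rw [hsum, f2 k₂ hk₂] at this
    rw [ha, hb]; linarith
  have d : ∀ f : ℝ → ℝ, ContDiff ℝ 2 f → ∀ t, HasDerivAt f (deriv f t) t := fun f hf t =>
    ((hf.differentiable (by norm_num)) t).hasDerivAt
  have dd : ∀ f : ℝ → ℝ, ContDiff ℝ 2 f → ∀ t, HasDerivAt (deriv f) (deriv (deriv f) t) t :=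
    fun f hf t => ((hf.differentiable_deriv_two) t).hasDerivAt
  have F : ∀ t, HasDerivAt (fun t => β * deriv ψ₂ t + ψ₂ t + (a * ψ₁ t + b * ψ₂ t))
      (β * deriv (deriv ψ₂) t + deriv ψ₂ t + (a * deriv ψ₁ t + b * deriv ψ₂ t)) t := fun t =>
    (((dd _ h2 t).const_mul β).add (d _ h2 t)).add
      (((d _ h1 t).const_mul a).add ((d _ h2 t).const_mul b))
  have G : ∀ t, HasDerivAt (fun t => β * deriv ψ₁ t + ψ₁ t - (β * deriv ψ₂ t + ψ₂ t))
      (β * deriv (deriv ψ₁) t + deriv ψ₁ t - (β * deriv (deriv ψ₂) t + deriv ψ₂ t)) t := fun t =>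
    (((dd _ h1 t).const_mul β).add (d _ h1 t)).sub (((dd _ h2 t).const_mul β).add (d _ h2 t))
  have p1 := hr 0
  have p2 := hp 0
  have q1 := deriv_shift_aux ψ₁ T _ hr 0
  have q2 := deriv_shift_aux ψ₂ T 0 (by simpa using hp) 0
  rw [zero_add] at p1 p2 q1 q2
  obtain ⟨c, -, hc⟩ := exists_hasDerivAt_eq_slope _ _ hT
    (fun t _ => (F t).continuousAt.continuousWithinAt) (fun t _ => F t)
  obtain ⟨c', -, hc'⟩ := exists_hasDerivAt_eq_slope _ _ hT
    (fun t _ => (G t).continuousAt.continuousWithinAt) (fun t _ => G t)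
  rw [sub_zero, eq_div_iff hT.ne', p1, p2, q2] at hc
  rw [sub_zero, eq_div_iff hT.ne', p1, p2, q1, q2] at hc'
  have k1 : (I - 1) * T ≤ a * (2 * Real.pi) := by
    have := mul_le_mul_of_nonneg_right
      (show I - 1 ≤ _ by linarith [e2 c, Real.sin_le_one (ψ₂ c)]) hT.le |>.trans_eq hc
    linarith
  have k2 : 2 * Real.pi ≤ 2 * T := by
    have := hc'.symm.trans_le (mul_le_mul_of_nonneg_right
      (show _ ≤ (2 : ℝ) by
        linarith [e2 c', e1 c', Real.sin_le_one (ψ₂ c'), Real.neg_one_le_sin (ψ₁ c')]) hT.le)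
    linarith
  have k3 : a * (2 * Real.pi) ≤ 1 / R * (2 * T) :=
    mul_le_mul haR k2 (by positivity) (by positivity)
  have k4 : (2 / R) * T < (I - 1) * T := mul_lt_mul_of_pos_right (by linarith) hT
  have k5 : (2 / R) * T = 1 / R * (2 * T) := by ring
  linarith
end

section
/- (Mirollo) Let N ≥ 1 and I > 1, and consider the zero-capacitance (β = 0) Josephson junction array with pure resistive load: φ_k' + sin(φ_k) + (1/N) Σ_{j=1}^N φ_j' = I for k = 1, …, N. Then this system admits a splay-phase (discrete rotating wave) solution: there exist T > 0 and a running function ψ of period T such that φ_j(t) = ψ(t − (j−1)T/N), j = 1, …, N, is a solution. -/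
open Real

section flow
variable {E : Type*} [NormedAddCommGroup E] [NormedSpace ℝ E]

/-- Global solutions of an autonomous ODE with bounded Lipschitz vector field. -/
lemma exists_global_sol [CompleteSpace E] (V : E → E) (K L : NNReal) (hV : LipschitzWith K V)
    (hL : ∀ x, ‖V x‖ ≤ L) (x : E) :
    ∃ y : ℝ → E, y 0 = x ∧ ∀ t, HasDerivAt y (V (y t)) t := by
  have loc : ∀ m : ℕ, ∃ y : ℝ → E, y 0 = x ∧
      ∀ t ∈ Set.Ioo (-((m : ℝ) + 1)) ((m : ℝ) + 1), HasDerivAt y (V (y t)) t := by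
    intro m
    have h0 : (0 : ℝ) ∈ Set.Icc (-((m : ℝ) + 1)) ((m : ℝ) + 1) := by
      constructor <;> linarith [Nat.cast_nonneg (α := ℝ) m]
    have hP : IsPicardLindelof (fun _ ↦ V) (⟨0, h0⟩ : Set.Icc (-((m : ℝ) + 1)) ((m : ℝ) + 1))
        x (L * (m + 1)) 0 L K := by
      apply IsPicardLindelof.of_time_independent
      · intro x _; exact hL x
      · exact hV.lipschitzOnWith
      · simp
    obtain ⟨y, hy0, hy⟩ := hP.exists_eq_forall_mem_Icc_hasDerivWithinAt₀
    refine ⟨y, hy0, fun t ht => ?_⟩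
    exact (hy t (Set.Ioo_subset_Icc_self ht)).hasDerivAt (Icc_mem_nhds ht.1 ht.2)
  choose Y hY0 hY using loc
  have agree : ∀ m k : ℕ, m ≤ k → Set.EqOn (Y m) (Y k) (Set.Ioo (-((m : ℝ) + 1)) ((m : ℝ) + 1)) := by
    intro m k hmk
    have hmk' : (m : ℝ) ≤ k := by exact_mod_cast hmk
    apply ODE_solution_unique_of_mem_Ioo (v := fun _ => V) (s := fun _ => Set.univ) (K := K) (t₀ := 0)
    · intro t _; exact hV.lipschitzOnWith
    · constructor <;> linarith [Nat.cast_nonneg (α := ℝ) m]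
    · intro t ht; exact ⟨hY m t ht, trivial⟩
    · intro t ht; exact ⟨hY k t ⟨by linarith [ht.1], by linarith [ht.2]⟩, trivial⟩
    · rw [hY0, hY0]
  have key : ∀ t : ℝ, ∀ m : ℕ, |t| < (m : ℝ) + 1 → Y ⌈|t|⌉₊ t = Y m t := by
    intro t m hm
    rcases le_total ⌈|t|⌉₊ m with h | h
    · apply agree _ _ h
      rw [Set.mem_Ioo, ← abs_lt]
      linarith [Nat.le_ceil |t|]
    · symm
      apply agree _ _ h
      rw [Set.mem_Ioo, ← abs_lt]
      exact hm
  refine ⟨fun t => Y ⌈|t|⌉₊ t, by simpa using hY0 0, fun t => ?_⟩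
  set m := ⌈|t|⌉₊ with hm
  have htm : |t| < (m : ℝ) + 1 := by linarith [Nat.le_ceil |t|]
  have h1 := hY m t (by rw [Set.mem_Ioo, ← abs_lt]; exact htm)
  refine h1.congr_of_eventuallyEq ?_
  have : ∀ᶠ s in nhds t, |s| < (m : ℝ) + 1 :=
    (continuous_abs.tendsto t).eventually (gt_mem_nhds htm)
  filter_upwards [this] with s hs using key s m hs

lemma sol_dist_le (V : E → E) (K : NNReal) (hV : LipschitzWith K V) (f g : ℝ → E)
    (hf : ∀ t, HasDerivAt f (V (f t)) t) (hg : ∀ t, HasDerivAt g (V (g t)) t) (t : ℝ) (ht : 0 ≤ t) :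
    dist (f t) (g t) ≤ dist (f 0) (g 0) * exp (K * t) := by
  have := dist_le_of_trajectories_ODE (v := fun _ => V) (K := K) (f := f) (g := g) (a := 0) (b := t)
    (δ := dist (f 0) (g 0)) (fun _ => hV)
    (HasDerivAt.continuousOn fun s _ => hf s) (fun s _ => (hf s).hasDerivWithinAt)
    (HasDerivAt.continuousOn fun s _ => hg s) (fun s _ => (hg s).hasDerivWithinAt) le_rfl t
    ⟨ht, le_rfl⟩
  simpa using this

lemma sol_unique (V : E → E) (K : NNReal) (hV : LipschitzWith K V) (f g : ℝ → E)
    (hf : ∀ t, HasDerivAt f (V (f t)) t) (hg : ∀ t, HasDerivAt g (V (g t)) t) (s : ℝ)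
    (h : f s = g s) : f = g :=
  ODE_solution_unique_univ (v := fun _ => V) (s := fun _ => Set.univ) (K := K) (t₀ := s)
    (fun _ => hV.lipschitzOnWith) (fun t => ⟨hf t, trivial⟩) (fun t => ⟨hg t, trivial⟩) h

end flow

/-- The vector field in the shifted phases `χ = φ - π/2`. -/
noncomputable def vf (n : ℕ) (I : ℝ) (x : Fin (n + 1) → ℝ) : Fin (n + 1) → ℝ := fun k =>
  I / 2 + (1 / 2) * ((1 / ((n : ℝ) + 1)) * ∑ j, cos (x j)) - cos (x k)

lemma avg_le (n : ℕ) (f : Fin (n + 1) → ℝ) (C : ℝ) (h : ∀ j, f j ≤ C) :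
    (1 / ((n : ℝ) + 1)) * ∑ j, f j ≤ C := by
  have h1 : ∑ j, f j ≤ ∑ _j : Fin (n + 1), C := Finset.sum_le_sum fun j _ => h j
  simp only [Finset.sum_const, Finset.card_univ, Fintype.card_fin, nsmul_eq_mul] at h1
  push_cast at h1
  have : (0 : ℝ) < (n : ℝ) + 1 := by positivity
  rw [one_div, inv_mul_le_iff₀ this]
  exact h1

lemma le_avg (n : ℕ) (f : Fin (n + 1) → ℝ) (C : ℝ) (h : ∀ j, C ≤ f j) :
    C ≤ (1 / ((n : ℝ) + 1)) * ∑ j, f j := by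
  have := avg_le n (fun j => - f j) (-C) (fun j => by simpa using h j)
  rw [Finset.sum_neg_distrib] at this
  linarith

lemma cos_lip (x y : ℝ) : |cos x - cos y| ≤ |x - y| := by
  have := Real.lipschitzWith_cos.dist_le_mul x y
  simpa [Real.dist_eq] using this

lemma vf_lip (n : ℕ) (I : ℝ) : LipschitzWith 2 (vf n I) := by
  apply LipschitzWith.of_dist_le_mul
  intro x y
  have hd : ∀ j, |cos (x j) - cos (y j)| ≤ dist x y := fun j =>
    (cos_lip _ _).trans (by simpa [Real.dist_eq] using dist_le_pi_dist x y j)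
  rw [dist_pi_le_iff (by positivity)]
  intro k
  have h1 := avg_le n (fun j => cos (x j) - cos (y j)) _ (fun j => (abs_le.1 (hd j)).2)
  have h2 := le_avg n (fun j => cos (x j) - cos (y j)) _ (fun j => (abs_le.1 (hd j)).1)
  rw [Finset.sum_sub_distrib, mul_sub] at h1 h2
  have h3 := abs_le.1 (hd k)
  have h0 : 0 ≤ dist x y := dist_nonneg
  rw [Real.dist_eq, abs_le]
  simp only [vf]
  push_cast
  constructor <;> linarith [h3.1, h3.2]

lemma vf_bdd (n : ℕ) (I : ℝ) (hI : 1 < I) (x : Fin (n + 1) → ℝ) :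
    ‖vf n I x‖ ≤ (⟨I + 2, by linarith⟩ : NNReal) := by
  rw [pi_norm_le_iff_of_nonneg (by positivity)]
  intro k
  have h1 := avg_le n (fun j => cos (x j)) 1 (fun j => cos_le_one _)
  have h2 := le_avg n (fun j => cos (x j)) (-1) (fun j => neg_one_le_cos _)
  rw [Real.norm_eq_abs, abs_le]
  simp only [vf]
  constructor <;> linarith [cos_le_one (x k), neg_one_le_cos (x k)]

/-- Being a global solution. -/
def IsSol (n : ℕ) (I : ℝ) (y : ℝ → Fin (n + 1) → ℝ) : Prop := ∀ t, HasDerivAt y (vf n I (y t)) t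

lemma IsSol.comp {n : ℕ} {I : ℝ} {y : ℝ → Fin (n + 1) → ℝ} (h : IsSol n I y) (j : Fin (n + 1))
    (t : ℝ) : HasDerivAt (fun s => y s j) (vf n I (y t) j) t := (hasDerivAt_pi.1 (h t)) j

lemma IsSol.cont {n : ℕ} {I : ℝ} {y : ℝ → Fin (n + 1) → ℝ} (h : IsSol n I y) (j : Fin (n + 1)) :
    Continuous (fun s => y s j) :=
  continuous_iff_continuousAt.2 fun t => (h.comp j t).continuousAt

/-- Reversing symmetry. -/
lemma IsSol.reflect {n : ℕ} {I : ℝ} {y : ℝ → Fin (n + 1) → ℝ} (h : IsSol n I y)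
    (σ : Equiv.Perm (Fin (n + 1))) (c : Fin (n + 1) → ℝ) (hc : ∀ j x, cos (c j - x) = cos x)
    (s : ℝ) (hs : ∀ j, y s j = c j - y s (σ j)) (t : ℝ) (j : Fin (n + 1)) :
    y t j = c j - y (2 * s - t) (σ j) := by
  have hz : IsSol n I (fun t j => c j - y (2 * s - t) (σ j)) := by
    intro t
    rw [hasDerivAt_pi]
    intro j
    have h1 : HasDerivAt (fun t : ℝ => 2 * s - t) (-1) t := by
      simpa using (hasDerivAt_id t).const_sub (2 * s)
    have h2 := ((h.comp (σ j) (2 * s - t)).comp t h1).const_sub (c j)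
    refine h2.congr_deriv ?_
    simp only [vf, hc]
    rw [Equiv.sum_comp σ (fun j => cos (y (2 * s - t) j))]
    ring
  have := sol_unique (vf n I) 2 (vf_lip n I) y _ h hz s (by
    funext j
    have e : 2 * s - s = s := by ring
    rw [e]
    exact hs j)
  exact congrFun (congrFun this t) j

/-- Conservation of the chord ratios. -/
lemma IsSol.chord {n : ℕ} {I : ℝ} {y : ℝ → Fin (n + 1) → ℝ} (h : IsSol n I y) (t : ℝ) :
    ∃ W : Fin (n + 1) → ℝ, (∀ j, 0 < W j) ∧ ∀ j k,
      sin ((y t j - y t k) / 2) = sin ((y 0 j - y 0 k) / 2) * W j * W k := by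
  let S : Fin (n + 1) → ℝ → ℝ := fun j t => ∫ s in (0 : ℝ)..t, sin (y s j) / 2
  have hS : ∀ j t, HasDerivAt (S j) (sin (y t j) / 2) t := by
    intro j t
    have hc : Continuous fun s => sin (y s j) / 2 := by
      have := h.cont j
      fun_prop
    exact (hc.integral_hasStrictDerivAt 0 t).hasDerivAt
  refine ⟨fun j => exp (S j t), fun j => exp_pos _, fun j k => ?_⟩
  let F : ℝ → ℝ := fun t => sin ((y t j - y t k) / 2) * exp (-(S j t + S k t))
  have hF : ∀ t, HasDerivAt F 0 t := by
    intro t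
    have h1 := (((h.comp j t).sub (h.comp k t)).div_const 2).sin
    have h2 := ((hS j t).add (hS k t)).neg.exp
    refine (h1.mul h2).congr_deriv ?_
    simp only [vf, Pi.sub_apply, Pi.add_apply, Pi.neg_apply]
    have e1 : y t j = (y t j + y t k) / 2 + (y t j - y t k) / 2 := by ring
    have e2 : y t k = (y t j + y t k) / 2 - (y t j - y t k) / 2 := by ring
    have c1 : cos (y t j) = cos ((y t j + y t k) / 2 + (y t j - y t k) / 2) := by rw [← e1]
    have c2 : cos (y t k) = cos ((y t j + y t k) / 2 - (y t j - y t k) / 2) := by rw [← e2]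
    have c3 : sin (y t j) = sin ((y t j + y t k) / 2 + (y t j - y t k) / 2) := by rw [← e1]
    have c4 : sin (y t k) = sin ((y t j + y t k) / 2 - (y t j - y t k) / 2) := by rw [← e2]
    rw [c1, c2, c3, c4, cos_add, cos_sub, sin_add, sin_sub]
    ring
  have hconst : F t = F 0 :=
    is_const_of_deriv_eq_zero (fun t => (hF t).differentiableAt) (fun t => (hF t).deriv) t 0
  have h0 : F 0 = sin ((y 0 j - y 0 k) / 2) := by simp [F, S]
  rw [h0] at hconst
  rw [← hconst]
  simp only [F]
  rw [mul_assoc, mul_assoc, ← exp_add, ← exp_add]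
  simp

lemma IsSol.order {n : ℕ} {I : ℝ} {y : ℝ → Fin (n + 1) → ℝ} (h : IsSol n I y)
    (j k : Fin (n + 1)) (h0 : 0 < y 0 j - y 0 k) (h1 : y 0 j - y 0 k < 2 * π) (t : ℝ) :
    0 < y t j - y t k ∧ y t j - y t k < 2 * π := by
  have hpos : ∀ t, 0 < sin ((y t j - y t k) / 2) := by
    intro t
    obtain ⟨W, hW, hh⟩ := h.chord t
    rw [hh j k]
    have : 0 < sin ((y 0 j - y 0 k) / 2) := sin_pos_of_pos_of_lt_pi (by linarith) (by linarith)
    have := hW j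
    have := hW k
    positivity
  have hcont : Continuous fun t => y t j - y t k := (h.cont j).sub (h.cont k)
  constructor
  · by_contra hcon
    push Not at hcon
    obtain ⟨s, hs⟩ := mem_range_of_exists_le_of_exists_ge hcont (c := 0) ⟨t, hcon⟩ ⟨0, h0.le⟩
    have := hpos s
    simp only at hs
    rw [hs] at this
    simp at this
  · by_contra hcon
    push Not at hcon
    obtain ⟨s, hs⟩ := mem_range_of_exists_le_of_exists_ge hcont (c := 2 * π) ⟨0, h1.le⟩ ⟨t, hcon⟩
    have := hpos s
    simp only at hs
    rw [hs] at this
    simp at this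

lemma IsSol.locked {n : ℕ} {I : ℝ} {y : ℝ → Fin (n + 1) → ℝ} (h : IsSol n I y)
    (j k : Fin (n + 1)) (h0 : sin ((y 0 j - y 0 k) / 2) = 0) (t : ℝ) :
    y t j - y t k = y 0 j - y 0 k := by
  have hz : ∀ t, HasDerivAt (fun t => y t j - y t k) 0 t := by
    intro t
    refine ((h.comp j t).sub (h.comp k t)).congr_deriv ?_
    obtain ⟨W, hW, hh⟩ := h.chord t
    have h1 : sin ((y t j - y t k) / 2) = 0 := by rw [hh, h0]; simp
    have h2 := cos_sub_cos (y t j) (y t k)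
    rw [h1] at h2
    simp only [vf]
    linarith
  exact is_const_of_deriv_eq_zero (fun t => (hz t).differentiableAt) (fun t => (hz t).deriv) t 0

/-- The total phase has speed at least `(I-1)/2`. -/
lemma IsSol.mean {n : ℕ} {I : ℝ} {y : ℝ → Fin (n + 1) → ℝ} (h : IsSol n I y) (hI : 1 < I) (s t : ℝ)
    (hst : s ≤ t) : (I - 1) / 2 * (t - s) ≤ ∑ j, y t j - ∑ j, y s j := by
  have hd : ∀ t, HasDerivAt (fun t => ∑ j, y t j) (∑ j, vf n I (y t) j) t := by
    intro t
    exact HasDerivAt.fun_sum fun j _ => h.comp j t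
  refine Convex.mul_sub_le_image_sub_of_le_deriv convex_univ
    (fun t _ => (hd t).continuousAt.continuousWithinAt)
    (fun t _ => (hd t).differentiableAt.differentiableWithinAt) (C := (I - 1) / 2)
    (fun t _ => ?_) s trivial t trivial hst
  rw [(hd t).deriv]
  have h1 : ∑ j, cos (y t j) ≤ (n : ℝ) + 1 := by
    have := Finset.sum_le_sum (s := Finset.univ) fun (j : Fin (n + 1)) _ => cos_le_one (y t j)
    simpa using this
  have h2 : ∑ j, vf n I (y t) j = ((n : ℝ) + 1) * I / 2 - (∑ j, cos (y t j)) / 2 := by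
    simp only [vf, Finset.sum_sub_distrib, Finset.sum_const, Finset.card_univ, Fintype.card_fin,
      nsmul_eq_mul]
    have : (n : ℝ) + 1 ≠ 0 := by positivity
    push_cast
    field_simp
    ring
  rw [h2]
  nlinarith [mul_nonneg (Nat.cast_nonneg (α := ℝ) n) (by linarith : 0 ≤ I - 1)]

lemma IsSol.speed {n : ℕ} {I : ℝ} {y : ℝ → Fin (n + 1) → ℝ} (h : IsSol n I y) (hI : 1 < I)
    (s t : ℝ) : dist (y t) (y s) ≤ (I + 2) * |t - s| := by
  have := Convex.norm_image_sub_le_of_norm_hasDerivWithin_le (f := y) (s := Set.univ)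
    (C := I + 2) (fun x _ => (h x).hasDerivWithinAt) (fun x _ => vf_bdd n I hI (y x)) convex_univ
    (Set.mem_univ s) (Set.mem_univ t)
  rwa [← dist_eq_norm, Real.norm_eq_abs] at this

/-- Hitting times of a level set of the total phase are continuous. -/
lemma hitting {Λ : Type*} [TopologicalSpace Λ] (n : ℕ) (I : ℝ) (hI : 1 < I)
    (Y : Λ → ℝ → Fin (n + 1) → ℝ) (hY : ∀ l, IsSol n I (Y l)) (hc : Continuous fun l => Y l 0)
    (A B : ℝ) (hAB : A < B) (hA : ∀ l, ∑ j, Y l 0 j = A) :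
    ∃ τ : Λ → ℝ, (∀ l, 0 < τ l ∧ ∑ j, Y l (τ l) j = B) ∧ Continuous fun l => Y l (τ l) := by
  have hI' : 0 < (I - 1) / 2 := by linarith
  have ex : ∀ l, ∃ t, 0 < t ∧ ∑ j, Y l t j = B := by
    intro l
    have hcont : Continuous fun t => ∑ j, Y l t j :=
      continuous_finsetSum _ fun j _ => (hY l).cont j
    set t1 := (B - A) / ((I - 1) / 2) with ht1
    have ht1p : 0 < t1 := div_pos (by linarith) hI'
    have h1 := (hY l).mean hI 0 t1 ht1p.le
    have e1 : (I - 1) / 2 * (t1 - 0) = B - A := by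
      have : I - 1 ≠ 0 := by linarith
      rw [ht1]; field_simp; ring
    rw [e1, hA] at h1
    obtain ⟨t, ht, hts⟩ := intermediate_value_Icc ht1p.le hcont.continuousOn
      (show B ∈ Set.Icc (∑ j, Y l 0 j) (∑ j, Y l t1 j) from ⟨by rw [hA]; exact hAB.le, by linarith⟩)
    refine ⟨t, lt_of_le_of_ne ht.1 ?_, hts⟩
    rintro rfl
    simp only [hA] at hts
    linarith
  choose τ hτ using ex
  refine ⟨τ, hτ, ?_⟩
  rw [continuous_iff_continuousAt]
  intro l0
  rw [ContinuousAt, tendsto_iff_dist_tendsto_zero]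
  let D : Λ → ℝ := fun l => dist (Y l 0) (Y l0 0) * exp (2 * τ l0)
  have hD : Filter.Tendsto (fun l => ((I + 2) * (((n : ℝ) + 1) / ((I - 1) / 2)) + 1) * D l)
      (nhds l0) (nhds 0) := by
    have h1 : Continuous D := (hc.dist continuous_const).mul continuous_const
    have h2 : Continuous fun l => ((I + 2) * (((n : ℝ) + 1) / ((I - 1) / 2)) + 1) * D l :=
      continuous_const.mul h1
    have h3 := h2.tendsto l0
    simpa [D] using h3
  refine squeeze_zero (fun l => dist_nonneg) (fun l => ?_) hD
  have h1 : dist (Y l (τ l0)) (Y l0 (τ l0)) ≤ D l :=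
    sol_dist_le (vf n I) 2 (vf_lip n I) _ _ (hY l) (hY l0) _ (hτ l0).1.le
  have h2 : |∑ j, Y l (τ l0) j - B| ≤ ((n : ℝ) + 1) * D l := by
    rw [← (hτ l0).2, ← Finset.sum_sub_distrib]
    refine (Finset.abs_sum_le_sum_abs _ _).trans ?_
    have : ∀ j ∈ Finset.univ, |Y l (τ l0) j - Y l0 (τ l0) j| ≤ D l := fun j _ =>
      le_trans (by simpa [Real.dist_eq] using dist_le_pi_dist (Y l (τ l0)) (Y l0 (τ l0)) j) h1
    refine (Finset.sum_le_sum this).trans ?_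
    simp
  have h3 : (I - 1) / 2 * |τ l - τ l0| ≤ ((n : ℝ) + 1) * D l := by
    refine le_trans ?_ h2
    rw [← (hτ l).2]
    rcases le_total (τ l0) (τ l) with h | h
    · have := (hY l).mean hI _ _ h
      rw [abs_of_nonneg (by linarith : 0 ≤ τ l - τ l0), abs_sub_comm]
      exact this.trans (le_abs_self _)
    · have := (hY l).mean hI _ _ h
      rw [abs_sub_comm, abs_of_nonneg (by linarith : 0 ≤ τ l0 - τ l)]
      exact this.trans (le_abs_self _)
  have h4 : |τ l - τ l0| ≤ ((n : ℝ) + 1) / ((I - 1) / 2) * D l := by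
    rw [div_mul_eq_mul_div, le_div_iff₀ hI']
    linarith
  have h5 := (hY l).speed hI (τ l0) (τ l)
  have h6 := dist_triangle (Y l (τ l)) (Y l (τ l0)) (Y l0 (τ l0))
  have h7 := mul_le_mul_of_nonneg_left h4 (by linarith : 0 ≤ I + 2)
  linarith

/-- Symmetry of the final configuration. -/
lemma end_symm (n : ℕ) (y W : Fin (n + 1) → ℝ) (hW : ∀ j, 0 < W j)
    (hyW : ∀ j k : Fin (n + 1), sin ((y j - y k) / 2) =
      sin (π * (((j : ℕ) : ℝ) - ((k : ℕ) : ℝ)) / ((n : ℝ) + 1)) * W j * W k)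
    (hord : ∀ j k : Fin (n + 1), k < j → 0 < y j - y k ∧ y j - y k < 2 * π)
    (hsum : ∑ j, y j = π * ((n : ℝ) + 1)) (hend : y 0 + y (Fin.last n) = 2 * π) (j : Fin (n + 1)) :
    y j + y (Fin.rev j) = 2 * π := by
  have hn : (0 : ℝ) < (n : ℝ) + 1 := by positivity
  by_cases hj0 : j = 0
  · subst hj0; simpa using hend
  by_cases hjl : j = Fin.last n
  · subst hjl; rw [Fin.rev_last]; linarith
  have hlast0 : (0 : Fin (n + 1)) < Fin.last n := lt_of_lt_of_le (Fin.pos_of_ne_zero hj0) (Fin.le_last j)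
  obtain ⟨b1, b2⟩ := hord _ _ hlast0
  have hβ : 0 < sin (y 0) := sin_pos_of_pos_of_lt_pi (by linarith) (by linarith)
  -- interior indices
  have key : ∀ i : Fin (n + 1), i ≠ 0 → i ≠ Fin.last n → ∃ c : ℝ, 0 < c ∧
      sin (y 0) * sin ((y i + y (Fin.rev i)) / 2) = c * (W (Fin.last n) ^ 2 - W 0 ^ 2) := by
    intro i hi0 hil
    have r1 : ((Fin.rev i : ℕ) : ℝ) = (n : ℝ) - (i : ℕ) := by
      rw [Fin.val_rev, Nat.cast_sub (by omega)]
      push_cast; ring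
    have hip : (0 : ℝ) < ((i : ℕ) : ℝ) := by
      have := Fin.pos_of_ne_zero hi0
      exact_mod_cast this
    have hin : ((i : ℕ) : ℝ) < n := by
      have := Fin.lt_last_iff_ne_last.2 hil
      exact_mod_cast this
    have s1 : 0 < sin (π * ((i : ℕ) : ℝ) / ((n : ℝ) + 1)) := by
      apply sin_pos_of_pos_of_lt_pi (by positivity)
      rw [div_lt_iff₀ hn]
      nlinarith [pi_pos]
    have s2 : 0 < sin (π * ((n : ℝ) - ((i : ℕ) : ℝ)) / ((n : ℝ) + 1)) := by
      have : 0 < (n : ℝ) - (i : ℕ) := by linarith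
      apply sin_pos_of_pos_of_lt_pi (by positivity)
      rw [div_lt_iff₀ hn]
      nlinarith [pi_pos]
    have e1 := hyW i 0
    have e2 := hyW (Fin.rev i) 0
    have e3 := hyW (Fin.last n) i
    have e4 := hyW (Fin.last n) (Fin.rev i)
    rw [r1] at e2 e4
    simp only [Fin.val_zero, Nat.cast_zero, sub_zero, Fin.val_last, sub_sub_cancel] at e1 e2 e3 e4
    have hl : y (Fin.last n) = 2 * π - y 0 := by linarith
    rw [hl] at e3 e4
    set s := sin (π * ((i : ℕ) : ℝ) / ((n : ℝ) + 1))
    set s' := sin (π * ((n : ℝ) - ((i : ℕ) : ℝ)) / ((n : ℝ) + 1))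
    refine ⟨s * s' * W i * W (Fin.rev i), by have := hW i; have := hW (Fin.rev i); positivity, ?_⟩
    have id : sin (y 0) * sin ((y i + y (Fin.rev i)) / 2) =
        sin ((2 * π - y 0 - y i) / 2) * sin ((2 * π - y 0 - y (Fin.rev i)) / 2)
        - sin ((y i - y 0) / 2) * sin ((y (Fin.rev i) - y 0) / 2) := by
      have a1 : (2 * π - y 0 - y i) / 2 = π - (y 0 / 2 + y i / 2) := by ring
      have a2 : (2 * π - y 0 - y (Fin.rev i)) / 2 = π - (y 0 / 2 + y (Fin.rev i) / 2) := by ring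
      have a3 : y 0 = 2 * (y 0 / 2) := by ring
      rw [a1, a2, sin_pi_sub, sin_pi_sub, sub_div, sub_div, add_div, sin_add, sin_add, sin_add,
        sin_sub, sin_sub]
      nth_rewrite 1 [a3]
      rw [sin_two_mul]
      ring
    rw [id, e1, e2, e3, e4]
    ring
  have rng : ∀ i : Fin (n + 1), i ≠ 0 → i ≠ Fin.last n →
      0 < (y i + y (Fin.rev i)) / 2 ∧ (y i + y (Fin.rev i)) / 2 < 2 * π := by
    intro i hi0 hil
    have hr0 : Fin.rev i ≠ 0 := by
      intro h; apply hil; rw [← Fin.rev_rev i, h, Fin.rev_zero]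
    have hrl : Fin.rev i ≠ Fin.last n := by
      intro h; apply hi0; rw [← Fin.rev_rev i, h, Fin.rev_last]
    have q1 := hord i 0 (Fin.pos_of_ne_zero hi0)
    have q2 := hord _ 0 (Fin.pos_of_ne_zero hr0)
    have q3 := hord _ i (Fin.lt_last_iff_ne_last.2 hil)
    have q4 := hord _ _ (Fin.lt_last_iff_ne_last.2 hrl)
    constructor <;> linarith [q1.1, q2.1, q3.1, q4.1]
  have hsum2 : ∑ i, (y i + y (Fin.rev i)) = ∑ _i : Fin (n + 1), 2 * π := by
    have hr : ∑ i, y (Fin.rev i) = ∑ i, y i := Equiv.sum_comp Fin.revPerm y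
    rw [Finset.sum_add_distrib, hr, hsum]
    simp
    ring
  have hends : ∀ i : Fin (n + 1), (i = 0 ∨ i = Fin.last n) → y i + y (Fin.rev i) = 2 * π := by
    rintro i (rfl | rfl)
    · simpa using hend
    · rw [Fin.rev_last]; linarith
  obtain ⟨q1, q2⟩ := rng j hj0 hjl
  rcases lt_trichotomy (W (Fin.last n) ^ 2 - W 0 ^ 2) 0 with hw | hw | hw
  · exfalso
    have hall : ∀ i : Fin (n + 1), i ≠ 0 → i ≠ Fin.last n → 2 * π < y i + y (Fin.rev i) := by
      intro i hi0 hil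
      obtain ⟨c, hc, hci⟩ := key i hi0 hil
      by_contra hcon
      push Not at hcon
      have : 0 ≤ sin ((y i + y (Fin.rev i)) / 2) :=
        sin_nonneg_of_nonneg_of_le_pi (rng i hi0 hil).1.le (by linarith)
      nlinarith [mul_nonneg hβ.le this, mul_neg_of_pos_of_neg hc hw]
    have : ∑ _i : Fin (n + 1), 2 * π < ∑ i, (y i + y (Fin.rev i)) := by
      apply Finset.sum_lt_sum
      · intro i _
        by_cases h : i = 0 ∨ i = Fin.last n
        · exact (hends i h).ge
        · push Not at h; exact (hall i h.1 h.2).le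
      · exact ⟨j, Finset.mem_univ _, hall j hj0 hjl⟩
    linarith
  · obtain ⟨c, hc, hci⟩ := key j hj0 hjl
    rw [hw, mul_zero] at hci
    have hs : sin ((y j + y (Fin.rev j)) / 2) = 0 := by
      rcases mul_eq_zero.1 hci with h | h
      · exact absurd h hβ.ne'
      · exact h
    by_contra hne
    rcases lt_or_gt_of_ne hne with h | h
    · have := sin_pos_of_pos_of_lt_pi q1 (by linarith)
      linarith
    · have := sin_pos_of_pos_of_lt_pi (x := (y j + y (Fin.rev j)) / 2 - π) (by linarith) (by linarith)
      rw [sin_sub_pi] at this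
      linarith
  · exfalso
    have hall : ∀ i : Fin (n + 1), i ≠ 0 → i ≠ Fin.last n → y i + y (Fin.rev i) < 2 * π := by
      intro i hi0 hil
      obtain ⟨c, hc, hci⟩ := key i hi0 hil
      by_contra hcon
      push Not at hcon
      have : 0 ≤ sin ((y i + y (Fin.rev i)) / 2 - π) :=
        sin_nonneg_of_nonneg_of_le_pi (by linarith) (by linarith [(rng i hi0 hil).2])
      rw [sin_sub_pi] at this
      nlinarith [mul_nonneg hβ.le this, mul_pos hc hw]
    have : ∑ i, (y i + y (Fin.rev i)) < ∑ _i : Fin (n + 1), 2 * π := by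
      apply Finset.sum_lt_sum
      · intro i _
        by_cases h : i = 0 ∨ i = Fin.last n
        · exact (hends i h).le
        · push Not at h; exact (hall i h.1 h.2).le
      · exact ⟨j, Finset.mem_univ _, hall j hj0 hjl⟩
    linarith

/-- Auxiliary complex numbers describing the initial configurations. -/
noncomputable def zc (n : ℕ) (l : ℝ) (j : Fin (n + 1)) : ℂ :=
  ⟨(1 - l) * sin (π * ((j : ℕ) : ℝ) / ((n : ℝ) + 1)), l * cos (π * ((j : ℕ) : ℝ) / ((n : ℝ) + 1))⟩

/-- The one-parameter family of symmetric initial configurations. -/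
noncomputable def pc (n : ℕ) (l : ℝ) (j : Fin (n + 1)) : ℝ :=
  if j = 0 then 0 else π - 2 * Complex.arg (zc n l j)

lemma ang_range (n : ℕ) (j : Fin (n + 1)) (hj : j ≠ 0) :
    0 < π * ((j : ℕ) : ℝ) / ((n : ℝ) + 1) ∧ π * ((j : ℕ) : ℝ) / ((n : ℝ) + 1) < π := by
  have hn : (0 : ℝ) < (n : ℝ) + 1 := by positivity
  have h1 : (0 : ℝ) < ((j : ℕ) : ℝ) := by
    have := Fin.pos_of_ne_zero hj
    exact_mod_cast this
  have h2 : ((j : ℕ) : ℝ) < (n : ℝ) + 1 := by exact_mod_cast j.2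
  refine ⟨by positivity, ?_⟩
  rw [div_lt_iff₀ hn]
  nlinarith [pi_pos]

lemma sin_ang_pos (n : ℕ) (j : Fin (n + 1)) (hj : j ≠ 0) :
    0 < sin (π * ((j : ℕ) : ℝ) / ((n : ℝ) + 1)) :=
  sin_pos_of_pos_of_lt_pi (ang_range n j hj).1 (ang_range n j hj).2

lemma arg_zc (n : ℕ) (l : ℝ) (hl : l ≤ 1) (j : Fin (n + 1)) :
    |Complex.arg (zc n l j)| ≤ π / 2 := by
  rw [Complex.abs_arg_le_pi_div_two_iff]
  by_cases hj : j = 0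
  · subst hj; simp [zc]
  · exact mul_nonneg (by linarith) (sin_ang_pos n j hj).le

lemma val_neg_fin (n : ℕ) (j : Fin (n + 1)) (hj : j ≠ 0) : ((-j : Fin (n + 1)) : ℕ) = n + 1 - j := by
  have := Fin.pos_of_ne_zero hj
  have h' : 0 < (j : ℕ) := this
  rw [Fin.val_neg']
  exact Nat.mod_eq_of_lt (by omega)

lemma pc_neg (n : ℕ) (l : ℝ) (hl : l ≤ 1) (j : Fin (n + 1)) (hj : j ≠ 0) :
    pc n l j = 2 * π - pc n l (-j) := by
  have hz : zc n l (-j) = (starRingEnd ℂ) (zc n l j) := by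
    have e : π * (((-j : Fin (n + 1)) : ℕ) : ℝ) / ((n : ℝ) + 1)
        = π - π * ((j : ℕ) : ℝ) / ((n : ℝ) + 1) := by
      rw [val_neg_fin n j hj, Nat.cast_sub j.2.le]
      have : (n : ℝ) + 1 ≠ 0 := by positivity
      push_cast
      field_simp
    apply Complex.ext
    · simp only [zc, Complex.conj_re]; rw [e, sin_pi_sub]
    · simp only [zc, Complex.conj_im]; rw [e, cos_pi_sub]; ring
  have hne : Complex.arg (zc n l j) ≠ π := by
    have := arg_zc n l hl j
    intro h
    rw [h, abs_of_pos pi_pos] at this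
    linarith [pi_pos]
  have hj' : -j ≠ 0 := by simpa using hj
  rw [pc, pc, if_neg hj, if_neg hj', hz, Complex.arg_conj, if_neg hne]
  ring

lemma pc_sum (n : ℕ) (l : ℝ) (hl : l ≤ 1) : ∑ j, pc n l j = π * n := by
  have h1 : ∑ j, pc n l (-j) = ∑ j, pc n l j := Equiv.sum_comp (Equiv.neg (Fin (n + 1))) (pc n l)
  have h2 : ∑ j, (pc n l j + pc n l (-j)) = ∑ j : Fin (n + 1), if j = 0 then 0 else 2 * π := by
    apply Finset.sum_congr rfl
    intro j _
    by_cases hj : j = 0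
    · subst hj; simp [pc]
    · rw [if_neg hj, pc_neg n l hl j hj]; ring
  rw [Finset.sum_add_distrib, h1, Fin.sum_univ_succ (fun j : Fin (n + 1) => if j = 0 then 0 else 2 * π)] at h2
  simp [Fin.succ_ne_zero] at h2
  linarith

lemma pc_range (n : ℕ) (l : ℝ) (hl : l ≤ 1) (j : Fin (n + 1)) : 0 ≤ pc n l j ∧ pc n l j ≤ 2 * π := by
  have := abs_le.1 (arg_zc n l hl j)
  rw [pc]
  split_ifs
  · constructor <;> linarith [pi_pos]
  · constructor <;> linarith [this.1, this.2]

lemma pc_chord (n : ℕ) (l : ℝ) (h0 : 0 < l) (h1 : l < 1) :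
    ∃ W : Fin (n + 1) → ℝ, (∀ j, 0 < W j) ∧ ∀ j k, sin ((pc n l j - pc n l k) / 2) =
      sin (π * (((j : ℕ) : ℝ) - ((k : ℕ) : ℝ)) / ((n : ℝ) + 1)) * W j * W k := by
  have hz : ∀ j, zc n l j ≠ 0 := by
    intro j hj
    by_cases h : j = 0
    · subst h
      have := congrArg Complex.im hj
      simp [zc] at this
      linarith
    · have := congrArg Complex.re hj
      simp only [zc, Complex.zero_re] at this
      have := mul_pos (by linarith : 0 < 1 - l) (sin_ang_pos n j h)
      linarith
  have hp : ∀ j, pc n l j = π - 2 * Complex.arg (zc n l j) := by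
    intro j
    rw [pc]
    split_ifs with h
    · subst h
      have : zc n l 0 = (l : ℂ) * Complex.I := by
        apply Complex.ext <;> simp [zc]
      rw [this, Complex.arg_real_mul _ h0, Complex.arg_I]
      ring
    · rfl
  have hll : 0 < l * (1 - l) := mul_pos h0 (by linarith)
  refine ⟨fun j => √(l * (1 - l)) / ‖zc n l j‖, fun j => div_pos (sqrt_pos.2 hll)
    (norm_pos_iff.2 (hz j)), fun j k => ?_⟩
  have e1 : (pc n l j - pc n l k) / 2 = Complex.arg (zc n l k) - Complex.arg (zc n l j) := by
    rw [hp, hp]; ring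
  have nj := norm_pos_iff.2 (hz j)
  have nk := norm_pos_iff.2 (hz k)
  have e2 : π * (((j : ℕ) : ℝ) - ((k : ℕ) : ℝ)) / ((n : ℝ) + 1) =
    π * ((j : ℕ) : ℝ) / ((n : ℝ) + 1) - π * ((k : ℕ) : ℝ) / ((n : ℝ) + 1) := by ring
  have e3 : √(l * (1 - l)) * √(l * (1 - l)) = l * (1 - l) := mul_self_sqrt hll.le
  rw [e1, sin_sub, Complex.sin_arg, Complex.sin_arg, Complex.cos_arg (hz j), Complex.cos_arg (hz k),
    e2, sin_sub]
  have e4 : ∀ a b c : ℝ, a * (√(l * (1 - l)) / b) * (√(l * (1 - l)) / c) = a * (l * (1 - l)) / (b * c) := by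
    intro a b c
    have : a * (√(l * (1 - l)) / b) * (√(l * (1 - l)) / c) =
      a * (√(l * (1 - l)) * √(l * (1 - l))) / (b * c) := by ring
    rw [this, e3]
  rw [e4]
  field_simp
  simp only [zc]
  ring

lemma pc_order (n : ℕ) (l : ℝ) (h0 : 0 < l) (h1 : l < 1) (j k : Fin (n + 1)) (hjk : k < j) :
    0 < pc n l j - pc n l k ∧ pc n l j - pc n l k < 2 * π := by
  obtain ⟨W, hW, hh⟩ := pc_chord n l h0 h1
  have hpos : 0 < sin ((pc n l j - pc n l k) / 2) := by
    rw [hh]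
    have hn : (0 : ℝ) < (n : ℝ) + 1 := by positivity
    have a1 : (0 : ℝ) < ((j : ℕ) : ℝ) - ((k : ℕ) : ℝ) := by
      rw [sub_pos]; exact_mod_cast hjk
    have a2 : ((j : ℕ) : ℝ) < (n : ℝ) + 1 := by exact_mod_cast j.2
    have a3 : (0 : ℝ) ≤ ((k : ℕ) : ℝ) := by positivity
    have : 0 < sin (π * (((j : ℕ) : ℝ) - ((k : ℕ) : ℝ)) / ((n : ℝ) + 1)) := by
      apply sin_pos_of_pos_of_lt_pi (by positivity)
      rw [div_lt_iff₀ hn]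
      nlinarith [pi_pos]
    have := hW j
    have := hW k
    positivity
  have r1 := pc_range n l h1.le j
  have r2 := pc_range n l h1.le k
  constructor
  · by_contra hcon
    push Not at hcon
    have := sin_nonpos_of_nonpos_of_neg_pi_le (x := (pc n l j - pc n l k) / 2) (by linarith) (by linarith [r1.1, r2.2])
    linarith
  · refine lt_of_le_of_ne (by linarith [r1.2, r2.1]) ?_
    intro h
    rw [h] at hpos
    simp at hpos

lemma pc_cont (n : ℕ) : Continuous fun l : unitInterval => pc n (l : ℝ) := by
  rw [continuous_pi_iff]
  intro j
  by_cases hj : j = 0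
  · subst hj
    simp only [pc, if_true]
    exact continuous_const
  simp only [pc, if_neg hj]
  have hs := sin_ang_pos n j hj
  by_cases hc : cos (π * ((j : ℕ) : ℝ) / ((n : ℝ) + 1)) = 0
  · have : ∀ l : unitInterval, Complex.arg (zc n l j) = 0 := by
      intro l
      rw [Complex.arg_eq_zero_iff]
      constructor
      · exact mul_nonneg (by linarith [l.2.2]) hs.le
      · simp [zc, hc]
    simp only [this]
    exact continuous_const
  · have hz : Continuous fun l : unitInterval => zc n (l : ℝ) j := by
      have : (fun l : unitInterval => zc n (l : ℝ) j) = fun l : unitInterval =>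
          (((1 - (l : ℝ)) * sin (π * ((j : ℕ) : ℝ) / ((n : ℝ) + 1)) : ℝ) : ℂ) +
          (((l : ℝ) * cos (π * ((j : ℕ) : ℝ) / ((n : ℝ) + 1)) : ℝ) : ℂ) * Complex.I := by
        funext l
        simp only [zc]
        generalize sin (π * ((j : ℕ) : ℝ) / ((n : ℝ) + 1)) = s
        generalize cos (π * ((j : ℕ) : ℝ) / ((n : ℝ) + 1)) = c
        apply Complex.ext <;> simp
      rw [this]
      fun_prop
    refine continuous_const.sub (continuous_const.mul ?_)
    rw [continuous_iff_continuousAt]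
    intro l
    refine ContinuousAt.comp (f := fun l : unitInterval => zc n (l : ℝ) j) (g := Complex.arg)
      (Complex.continuousAt_arg ?_) hz.continuousAt
    rw [Complex.mem_slitPlane_iff]
    by_cases hl : (l : ℝ) = 1
    · right; simp [zc, hl, hc]
    · left
      have : (l : ℝ) < 1 := lt_of_le_of_ne l.2.2 hl
      exact mul_pos (by linarith) hs

lemma pc_zero (n : ℕ) (j : Fin (n + 1)) (hj : j ≠ 0) : pc n 0 j = π := by
  have : Complex.arg (zc n 0 j) = 0 := by
    rw [Complex.arg_eq_zero_iff]
    constructor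
    · simpa [zc] using (sin_ang_pos n j hj).le
    · simp [zc]
  rw [pc, if_neg hj, this]; ring

lemma pc_at_zero (n : ℕ) (l : ℝ) : pc n l 0 = 0 := by simp [pc]

lemma pc_one (n : ℕ) (j : Fin (n + 1)) : 
    (2 * (j : ℕ) < n + 1 ∧ pc n 1 j = 0) ∨ (2 * (j : ℕ) = n + 1 ∧ pc n 1 j = π) ∨
    (n + 1 < 2 * (j : ℕ) ∧ pc n 1 j = 2 * π) := by
  have hn : (0 : ℝ) < (n : ℝ) + 1 := by positivity
  by_cases hj : j = 0
  · subst hj; left; simp [pc]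
  have hz : zc n 1 j = ((cos (π * ((j : ℕ) : ℝ) / ((n : ℝ) + 1)) : ℝ) : ℂ) * Complex.I := by
    simp only [zc]
    generalize sin (π * ((j : ℕ) : ℝ) / ((n : ℝ) + 1)) = s
    generalize cos (π * ((j : ℕ) : ℝ) / ((n : ℝ) + 1)) = c
    apply Complex.ext <;> simp
  obtain ⟨r1, r2⟩ := ang_range n j hj
  rcases lt_trichotomy (2 * (j : ℕ)) (n + 1) with h | h | h
  · left
    refine ⟨h, ?_⟩
    have h' : 2 * ((j : ℕ) : ℝ) < (n : ℝ) + 1 := by exact_mod_cast h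
    have : 0 < cos (π * ((j : ℕ) : ℝ) / ((n : ℝ) + 1)) := by
      apply cos_pos_of_mem_Ioo
      refine ⟨by linarith [pi_pos], ?_⟩
      rw [div_lt_iff₀ hn]
      nlinarith [pi_pos]
    rw [pc, if_neg hj, hz, Complex.arg_real_mul _ this, Complex.arg_I]; ring
  · right; left
    refine ⟨h, ?_⟩
    have h' : 2 * ((j : ℕ) : ℝ) = (n : ℝ) + 1 := by exact_mod_cast h
    have : cos (π * ((j : ℕ) : ℝ) / ((n : ℝ) + 1)) = 0 := by
      have : π * ((j : ℕ) : ℝ) / ((n : ℝ) + 1) = π / 2 := by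
        rw [← h']
        have : ((j : ℕ) : ℝ) ≠ 0 := by
          intro h0; rw [h0] at h'; linarith
        field_simp
      rw [this, cos_pi_div_two]
    rw [pc, if_neg hj, hz, this]; simp
  · right; right
    refine ⟨h, ?_⟩
    have h' : (n : ℝ) + 1 < 2 * ((j : ℕ) : ℝ) := by exact_mod_cast h
    have : cos (π * ((j : ℕ) : ℝ) / ((n : ℝ) + 1)) < 0 := by
      apply cos_neg_of_pi_div_two_lt_of_lt
      · rw [lt_div_iff₀ hn]
        nlinarith [pi_pos]
      · linarith [pi_pos]
    have hz' : zc n 1 j = ((-cos (π * ((j : ℕ) : ℝ) / ((n : ℝ) + 1)) : ℝ) : ℂ) * (-Complex.I) := by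
      rw [hz]; push_cast; ring
    rw [pc, if_neg hj, hz', Complex.arg_real_mul _ (by linarith), Complex.arg_neg_I]; ring

/-- Existence of a solution joining two symmetric configurations. -/
lemma exists_orbit (n : ℕ) (I : ℝ) (hI : 1 < I) :
    ∃ (y : ℝ → Fin (n + 1) → ℝ) (t1 : ℝ), IsSol n I y ∧ 0 < t1 ∧
      (∀ j, y 0 j = (if j = 0 then 0 else 2 * π) - y 0 (-j)) ∧
      (∀ j, y t1 j = 2 * π - y t1 (Fin.rev j)) := by
  have ex : ∀ l : unitInterval, ∃ y : ℝ → Fin (n + 1) → ℝ, y 0 = pc n (l : ℝ) ∧ IsSol n I y :=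
    fun l => exists_global_sol (vf n I) 2 _ (vf_lip n I) (vf_bdd n I hI) _
  choose Y hY0 hY using ex
  obtain ⟨τ, hτ, hcont⟩ := hitting n I hI Y hY (by simpa only [hY0] using pc_cont n)
    (π * n) (π * ((n : ℝ) + 1)) (by linarith [pi_pos])
    (fun l => by rw [hY0]; exact pc_sum n l l.2.2)
  have hsym : ∀ l j, Y l 0 j = (if j = 0 then 0 else 2 * π) - Y l 0 (-j) := by
    intro l j
    rw [hY0]
    by_cases hj : j = 0
    · subst hj; simp [pc]
    · rw [if_neg hj]; exact pc_neg n l l.2.2 j hj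
  suffices H : ∃ l, ∀ j, Y l (τ l) j + Y l (τ l) (Fin.rev j) = 2 * π by
    obtain ⟨l, hl⟩ := H
    exact ⟨Y l, τ l, hY l, (hτ l).1, hsym l, fun j => by linarith [hl j]⟩
  by_cases hn : n ≤ 1
  · refine ⟨0, fun j => ?_⟩
    have hs := (hτ 0).2
    interval_cases n
    · simp at hs
      fin_cases j
      simp [hs]; ring
    · simp [Fin.sum_univ_two] at hs
      fin_cases j
      · have : Fin.rev (0 : Fin 2) = 1 := rfl
        simp [this]; linarith
      · have : Fin.rev (1 : Fin 2) = 0 := rfl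
        simp [this]; linarith
  push Not at hn
  have hn' : (2 : ℝ) ≤ n := by exact_mod_cast hn
  have hl0 : Fin.last n ≠ 0 := by
    intro h
    have := congrArg Fin.val h
    simp at this; omega
  let G : unitInterval → ℝ := fun l => Y l (τ l) 0 + Y l (τ l) (Fin.last n)
  have hG : Continuous G := ((continuous_apply 0).comp hcont).add ((continuous_apply _).comp hcont)
  have hG0 : G 0 < 2 * π := by
    have h0 : Y 0 0 = pc n 0 := by rw [hY0]; simp
    have hs := (hτ 0).2
    set x := Y 0 (τ 0) (Fin.last n) with hx
    have e : ∀ j : Fin n, Y 0 (τ 0) j.succ = x := by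
      intro j
      have := (hY 0).locked j.succ (Fin.last n) (by
        rw [h0, pc_zero n _ (Fin.succ_ne_zero j), pc_zero n _ hl0]; simp) (τ 0)
      rw [h0, pc_zero n _ (Fin.succ_ne_zero j), pc_zero n _ hl0] at this
      linarith
    have o := ((hY 0).order (Fin.last n) 0 (by
        rw [h0, pc_zero n _ hl0, pc_at_zero]; linarith [pi_pos]) (by
        rw [h0, pc_zero n _ hl0, pc_at_zero]; linarith [pi_pos]) (τ 0)).1
    rw [Fin.sum_univ_succ] at hs
    simp only [e, Finset.sum_const, Finset.card_univ, Fintype.card_fin, nsmul_eq_mul] at hs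
    show Y 0 (τ 0) 0 + x < 2 * π
    have hxpi : π < x := by
      have : 0 < ((n : ℝ) + 1) * (x - π) := by nlinarith
      have := (mul_pos_iff_of_pos_left (by positivity : (0 : ℝ) < (n : ℝ) + 1)).1 this
      linarith
    nlinarith
  have hG1 : 2 * π < G 1 := by
    have h0 : Y 1 0 = pc n 1 := by rw [hY0]; simp
    have hs := (hτ 1).2
    set x := Y 1 (τ 1) 0 with hx
    have e : ∀ j : Fin (n + 1), 2 * (j : ℕ) ≠ n + 1 → Y 1 (τ 1) j = x + pc n 1 j := by
      intro j hj
      have := (hY 1).locked j 0 (by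
        rw [h0, pc_at_zero]
        rcases pc_one n j with h | h | h
        · rw [h.2]; simp
        · exact absurd h.1 hj
        · rw [h.2]; simp) (τ 1)
      rw [h0, pc_at_zero] at this
      linarith
    have hlast : Y 1 (τ 1) (Fin.last n) = x + 2 * π := by
      rw [e _ (by simp; omega)]
      rcases pc_one n (Fin.last n) with h | h | h
      · have := h.1; simp at this; omega
      · have := h.1; simp at this; omega
      · rw [h.2]
    have hxpos : 0 < x := by
      have hsp := pc_sum n 1 le_rfl
      by_cases hm : ∃ m : Fin (n + 1), 2 * (m : ℕ) = n + 1
      · obtain ⟨m, hm⟩ := hm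
        have hpm : pc n 1 m = π := by
          rcases pc_one n m with h | h | h
          · omega
          · exact h.2
          · omega
        have o := ((hY 1).order m 0 (by
          rw [h0, hpm, pc_at_zero]; linarith [pi_pos]) (by
          rw [h0, hpm, pc_at_zero]; linarith [pi_pos]) (τ 1)).2
        have : ∑ j, Y 1 (τ 1) j < ∑ j : Fin (n + 1), (x + pc n 1 j + if j = m then π else 0) := by
          apply Finset.sum_lt_sum
          · intro j _
            by_cases hjm : j = m
            · subst hjm; rw [if_pos rfl, hpm]; linarith
            · rw [if_neg hjm, e j (by intro h; apply hjm; apply Fin.ext; omega)]; linarith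
          · exact ⟨m, Finset.mem_univ _, by rw [if_pos rfl, hpm]; linarith⟩
        rw [hs, Finset.sum_add_distrib, Finset.sum_add_distrib, hsp] at this
        simp at this
        have : 0 < ((n : ℝ) + 1) * x := by linarith
        exact (mul_pos_iff_of_pos_left (by positivity : (0 : ℝ) < (n : ℝ) + 1)).1 this
      · push Not at hm
        have : ∑ j, Y 1 (τ 1) j = ∑ j : Fin (n + 1), (x + pc n 1 j) :=
          Finset.sum_congr rfl fun j _ => e j (hm j)
        rw [hs, Finset.sum_add_distrib, hsp] at this
        simp at this
        have : 0 < ((n : ℝ) + 1) * x := by linarith [pi_pos]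
        exact (mul_pos_iff_of_pos_left (by positivity : (0 : ℝ) < (n : ℝ) + 1)).1 this
    show 2 * π < x + Y 1 (τ 1) (Fin.last n)
    rw [hlast]; linarith
  obtain ⟨l, hl⟩ := mem_range_of_exists_le_of_exists_ge hG ⟨0, hG0.le⟩ ⟨1, hG1.le⟩
  have l0 : 0 < (l : ℝ) := by
    refine lt_of_le_of_ne l.2.1 fun h => ?_
    have : l = 0 := Subtype.ext h.symm
    rw [this] at hl; linarith
  have l1 : (l : ℝ) < 1 := by
    refine lt_of_le_of_ne l.2.2 fun h => ?_
    have : l = 1 := Subtype.ext h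
    rw [this] at hl; linarith
  refine ⟨l, ?_⟩
  obtain ⟨W, hW, hh⟩ := pc_chord n l l0 l1
  obtain ⟨W', hW', hh'⟩ := (hY l).chord (τ l)
  refine end_symm n (Y l (τ l)) (fun j => W j * W' j) (fun j => mul_pos (hW j) (hW' j)) ?_ ?_
    (hτ l).2 hl
  · intro j k
    rw [hh', hY0, hh]; ring
  · intro j k hjk
    have := pc_order n l l0 l1 j k hjk
    exact (hY l).order j k (by rw [hY0]; exact this.1) (by rw [hY0]; exact this.2) (τ l)

/-- **(Mirollo.)** For `N ≥ 1` and `I > 1` the zero-capacitance (`β = 0`) Josephson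
junction array with pure resistive load,
`φ_k' + sin (φ_k) + (1/N) ∑_j φ_j' = I`, admits a splay-phase (discrete rotating wave)
solution: there are `T > 0` and a running function `ψ` of period `T` such that
`φ_j(t) = ψ(t − (j−1)T/N)` is a solution. -/
theorem mirollo_splay_phase (N : ℕ) (hN : 1 ≤ N) (I : ℝ) (hI : 1 < I) :
    ∃ (T : ℝ) (ψ : ℝ → ℝ), 0 < T ∧ ContDiff ℝ 1 ψ ∧ IsRunning ψ T ∧
      (∀ k : Fin N, ∀ t : ℝ,
        deriv (fun s => ψ (s - ((k : ℕ) : ℝ) * T / (N : ℝ))) t +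
          Real.sin (ψ (t - ((k : ℕ) : ℝ) * T / (N : ℝ))) +
          (1 / (N : ℝ)) *
            ∑ j : Fin N, deriv (fun s => ψ (s - ((j : ℕ) : ℝ) * T / (N : ℝ))) t = I) := by
  obtain ⟨n, rfl⟩ : ∃ n, N = n + 1 := ⟨N - 1, by omega⟩
  obtain ⟨y, t1, hy, ht1, hs0, hs1⟩ := exists_orbit n I hI
  have hn : (0 : ℝ) < (n : ℝ) + 1 := by positivity
  have refl0 := hy.reflect (Equiv.neg (Fin (n + 1))) (fun j => if j = 0 then 0 else 2 * π)
    (by intro j x; split_ifs <;> simp [cos_two_pi_sub]) 0 hs0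
  have refl1 := hy.reflect Fin.revPerm (fun _ => 2 * π) (by intro j x; simp [cos_two_pi_sub]) t1 hs1
  have shift : ∀ t j, y (t + 2 * t1) j = y t (j + 1) + if j = Fin.last n then 2 * π else 0 := by
    intro t j
    have h1 := refl1 (t + 2 * t1) j
    have h2 := refl0 (-t) (Fin.rev j)
    have e1 : 2 * t1 - (t + 2 * t1) = -t := by ring
    have e2 : 2 * 0 - -t = t := by ring
    rw [e1] at h1
    rw [e2] at h2
    have e3 : Equiv.neg (Fin (n + 1)) (Fin.rev j) = j + 1 := by
      simp only [Equiv.neg_apply]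
      rw [neg_eq_iff_add_eq_zero]
      apply Fin.ext
      rw [Fin.val_add, Fin.val_add, Fin.val_rev, Fin.val_zero, Fin.val_one', ]
      simp only [Nat.add_mod_mod]
      have := j.2
      have e : n + 1 - ((j : ℕ) + 1) + ((j : ℕ) + 1) = n + 1 := by omega
      rw [e, Nat.mod_self]
    rw [e3] at h2
    rw [h1, Fin.revPerm_apply, h2]
    by_cases hj : j = Fin.last n
    · subst hj; simp; ring
    · have : Fin.rev j ≠ 0 := by
        intro h; apply hj; rw [← Fin.rev_rev j, h, Fin.rev_zero]
      rw [if_neg hj, if_neg this]; ring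
  have iter : ∀ (k : ℕ) (hk : k < n + 1) (t : ℝ), y (t + k * (2 * t1)) 0 = y t ⟨k, hk⟩ := by
    intro k
    induction k with
    | zero => intro hk t; simp
    | succ k ih =>
      intro hk t
      have e : t + ((k + 1 : ℕ) : ℝ) * (2 * t1) = (t + 2 * t1) + k * (2 * t1) := by push_cast; ring
      rw [e, ih (by omega), shift]
      have hne : (⟨k, by omega⟩ : Fin (n + 1)) ≠ Fin.last n := by
        intro h; have := congrArg Fin.val h; simp at this; omega
      rw [if_neg hne, add_zero]
      congr 1
      apply Fin.ext
      rw [Fin.val_add, Fin.val_one']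
      simp only [Nat.add_mod_mod]
      exact Nat.mod_eq_of_lt hk
  have hψ : ∀ t, HasDerivAt (fun t => y t 0 + π / 2) (vf n I (y t) 0) t := fun t =>
    (hy.comp 0 t).add_const _
  have hvc : Continuous fun t => vf n I (y t) 0 := by
    have h1 := fun j => hy.cont j
    simp only [vf]
    fun_prop
  refine ⟨((n : ℝ) + 1) * (2 * t1), fun t => y t 0 + π / 2, by positivity, ?_, ?_, ?_⟩
  · rw [contDiff_one_iff_deriv]
    refine ⟨fun t => (hψ t).differentiableAt, ?_⟩
    have : deriv (fun t => y t 0 + π / 2) = fun t => vf n I (y t) 0 := funext fun t => (hψ t).deriv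
    rw [this]
    exact hvc
  · intro t
    have e : t + ((n : ℝ) + 1) * (2 * t1) = (t + 2 * t1) + n * (2 * t1) := by ring
    have h1 : (⟨n, by omega⟩ : Fin (n + 1)) = Fin.last n := rfl
    simp only
    rw [e, iter n (by omega), h1, shift, if_pos rfl, Fin.last_add_one]
    ring
  · intro k t
    -- base time at which the configuration is read off
    have hd : ∀ j : Fin (n + 1), ((j : ℕ) : ℝ) * (((n : ℝ) + 1) * (2 * t1)) / (((n + 1 : ℕ) : ℕ) : ℝ)
        = ((j : ℕ) : ℝ) * (2 * t1) := by
      intro j; push_cast; field_simp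
    have hrev : ∀ (j : Fin (n + 1)) (s : ℝ), y (s - ((j : ℕ) : ℝ) * (2 * t1)) 0 =
        y (s - n * (2 * t1)) (Fin.rev j) := by
      intro j s
      have := iter (Fin.rev j : ℕ) (Fin.rev j).2 (s - n * (2 * t1))
      rw [Fin.eta] at this
      rw [← this]
      congr 1
      rw [Fin.val_rev, Nat.cast_sub (by omega)]
      push_cast; ring
    simp only [hd, hrev]
    have hder : ∀ j : Fin (n + 1), deriv (fun s => y (s - n * (2 * t1)) j + π / 2) t =
        vf n I (y (t - n * (2 * t1))) j := by
      intro j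
      exact (((hy.comp j (t - n * (2 * t1))).comp_sub_const t _).add_const _).deriv
    simp only [hder]
    have hsr : ∑ j, vf n I (y (t - n * (2 * t1))) (Fin.rev j) = ∑ j, vf n I (y (t - n * (2 * t1))) j :=
      Equiv.sum_comp Fin.revPerm (fun j => vf n I (y (t - n * (2 * t1))) j)
    rw [hsr]
    rw [sin_add_pi_div_two]
    simp only [vf, Finset.sum_sub_distrib, Finset.sum_const, Finset.card_univ, Fintype.card_fin,
      nsmul_eq_mul]
    push_cast
    field_simp
    ring
end
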